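/- arXiv:1003.1688 — 2 statements merged into one kernel-verified Lean document; each statement's English description precedes it below -/
import Mathlib

section
/- Let n be a positive integer, let 0 ≤ k ≤ 1, and let λ = (λ_a, 1^{λ_l − 1}) be a hook partition with λ_l ≤ λ_a ≤ k+n. Then the difference s_{S(λ^t,k,n)} − s_{S(λ,k,n)} is Schur-positive. -/
/-!
In a Littlewood-Richardson tableau of shape `S(λ,k,n)` the staircase part is forced: its row `i`
reads `1, 2, …, i + 1`, so it has content `δ_n` (`stair_forced`). Because consecutive parts of `δ_n`
differ by one, the lattice condition makes the row of the hook foundation strictly increasing with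
entries at most `n + 1`; the leg is strictly increasing anyway. Hence the tableau is the same thing
as a pair `(X, Y)`, the set of row values and the set of leg values below the corner, subject to the
conditions collected in `Adm` (`LRcount_eq`).

For a fixed content, the conditions depend only on the multiset union of `X` and `Y`: the minimum
lies in `X`, the `t` values occurring twice lie in both sets, values above `n + 1` lie in `Y`, and
each of the remaining `e` free values may be put into either set. A hook with row length `c + 1` and
leg length `b + 1` therefore has `e.choose (c - t)` tableaux of this content, and its transpose has
`e.choose (b - t)`. If `b ≤ c` then `e - (c - t) ≤ b - t ≤ c - t`, and unimodality of the binomial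
coefficients gives the inequality (`ncard_adm_le`).
-/

/-- The cells of the rotated staircase `Δ_n`, realized as the skew diagram
`(n^n)/δ_{n-1}`, placed in rows `0,…,n-1` and columns `k,…,n+k-1`
(each row right-justified; the row of length `i+1` is row `i`). -/
def staircaseCells (n k : ℕ) : Set (ℕ × ℕ) :=
  {p | p.1 < n ∧ k + n - 1 - p.1 ≤ p.2 ∧ p.2 < n + k}

/-- The cells of the foundation `λ/δ_{k-1}`, placed in rows `n, n+1, …`;
row `n + i` contains the cells of row `i` of `λ/δ_{k-1}`. -/
def foundationCells (lam : ℕ → ℕ) (k n : ℕ) : Set (ℕ × ℕ) :=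
  {p | n ≤ p.1 ∧ k - 1 - (p.1 - n) ≤ p.2 ∧ p.2 < lam (p.1 - n)}

/-- The staircase with bad foundation `𝒮(λ,k,n)`: the foundation `λ/δ_{k-1}`
is placed immediately below `Δ_n`, extending `k` columns to its left, so that
rows overlap in exactly `λ₁ - k` columns. -/
def SBF (lam : ℕ → ℕ) (k n : ℕ) : Set (ℕ × ℕ) :=
  staircaseCells n k ∪ foundationCells lam k n

/-- `T` is a semistandard Young tableau of shape `D`: positive entries on `D`,
zero outside `D`, rows weakly increasing, columns strictly increasing. -/
def IsSSYT (D : Set (ℕ × ℕ)) (T : ℕ × ℕ → ℕ) : Prop :=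
  (∀ p ∈ D, 0 < T p) ∧ (∀ p, p ∉ D → T p = 0) ∧
  (∀ i j1 j2, j1 ≤ j2 → (i, j1) ∈ D → (i, j2) ∈ D → T (i, j1) ≤ T (i, j2)) ∧
  (∀ i1 i2 j, i1 < i2 → (i1, j) ∈ D → (i2, j) ∈ D → T (i1, j) < T (i2, j))

/-- The set of cells of `D` read up to (and including) cell `q`, when rows are
read right to left, from the top row to the bottom row. -/
def readUpTo (D : Set (ℕ × ℕ)) (q : ℕ × ℕ) : Set (ℕ × ℕ) :=
  {p ∈ D | p.1 < q.1 ∨ (p.1 = q.1 ∧ q.2 ≤ p.2)}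

/-- The reading word of `T` is lattice: at every point while reading, for each
`v ≥ 1` the number of `v+1`'s read so far never exceeds the number of `v`'s. -/
def IsLattice (D : Set (ℕ × ℕ)) (T : ℕ × ℕ → ℕ) : Prop :=
  ∀ q ∈ D, ∀ v, 1 ≤ v →
    ({p ∈ readUpTo D q | T p = v + 1}).ncard ≤ ({p ∈ readUpTo D q | T p = v}).ncard

/-- The number of entries of `T` (on the shape `D`) equal to `v`. -/
noncomputable def contentOf (D : Set (ℕ × ℕ)) (T : ℕ × ℕ → ℕ) (v : ℕ) : ℕ :=
  ({p ∈ D | T p = v}).ncard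

/-- The number of SSYT of shape `D` with lattice reading word and content `ν`
(`ν v` = number of entries equal to `v`, for `v ≥ 1`).  By the
Littlewood-Richardson rule this is the coefficient of the Schur function `s_ν`
in the skew Schur function `s_D`. -/
noncomputable def LRcount (D : Set (ℕ × ℕ)) (nu : ℕ → ℕ) : ℕ :=
  {T : ℕ × ℕ → ℕ | IsSSYT D T ∧ IsLattice D T ∧ ∀ v, 1 ≤ v → contentOf D T v = nu v}.ncard

/-- The number of SSYT of shape `D` with content `α`.  For `α` supported on
`{1,…,m}` this is the coefficient of the monomial `x^α` in the skew Schur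
polynomial `s_D(x_1,…,x_m)`; hence `s_{D₁} = s_{D₂}` in `m` variables iff
`SSYTcount D₁ α = SSYTcount D₂ α` for all such `α`. -/
noncomputable def SSYTcount (D : Set (ℕ × ℕ)) (alpha : ℕ → ℕ) : ℕ :=
  {T : ℕ × ℕ → ℕ | IsSSYT D T ∧ ∀ v, 1 ≤ v → contentOf D T v = alpha v}.ncard

/-- `lam` is a partition, recorded as its weakly decreasing, eventually zero
sequence of row lengths: `lam i` is the length of row `i+1`. -/
def IsPartition (lam : ℕ → ℕ) : Prop :=
  (∀ i j, i ≤ j → lam j ≤ lam i) ∧ ∃ N, ∀ i, N ≤ i → lam i = 0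

/-- The hook partition `(a, 1^{l-1})` with arm (first row) of length `a` and
leg (first column) of length `l`. -/
def hookFun (a l : ℕ) : ℕ → ℕ := fun i => if i = 0 then a else if i < l then 1 else 0

namespace HookSBF

open Finset

/-! ### Counting values along the reading word -/

/-- The number of entries `v` among the cells of `D` read up to position `(i, j)`.  The position
need not be a cell of `D`, so that counts can be followed one column at a time. -/
noncomputable def R (D : Set (ℕ × ℕ)) (T : ℕ × ℕ → ℕ) (i j v : ℕ) : ℕ :=
  ({p ∈ readUpTo D (i, j) | T p = v}).ncard

lemma R_step {D : Set (ℕ × ℕ)} (hD : D.Finite) (T : ℕ × ℕ → ℕ) (i j v : ℕ)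
    [Decidable ((i, j) ∈ D ∧ T (i, j) = v)] :
    R D T i j v = R D T i (j + 1) v + if (i, j) ∈ D ∧ T (i, j) = v then 1 else 0 := by
  have hfin : ({p ∈ readUpTo D (i, j + 1) | T p = v}).Finite :=
    hD.subset fun p hp => hp.1.1
  unfold R
  split_ifs with h
  · rw [← Set.ncard_insert_of_notMem (a := (i, j)) _ hfin]
    · congr 1
      ext ⟨p, q⟩
      simp only [readUpTo, Set.mem_ofPred_eq, Set.mem_insert_iff, Prod.mk.injEq]
      constructor
      · rintro ⟨⟨h1, h2⟩, h3⟩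
        by_cases hq : p = i ∧ q = j
        · exact Or.inl hq
        · exact Or.inr ⟨⟨h1, by omega⟩, h3⟩
      · rintro (⟨rfl, rfl⟩ | ⟨⟨h1, h2⟩, h3⟩)
        · exact ⟨⟨h.1, by omega⟩, h.2⟩
        · exact ⟨⟨h1, by omega⟩, h3⟩
    · rintro ⟨⟨-, h2⟩, -⟩
      simp at h2
  · rw [Nat.add_zero]
    congr 1
    ext ⟨p, q⟩
    simp only [readUpTo, Set.mem_ofPred_eq]
    constructor
    · rintro ⟨⟨h1, h2⟩, h3⟩
      refine ⟨⟨h1, ?_⟩, h3⟩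
      by_cases hq : p = i ∧ q = j
      · obtain ⟨rfl, rfl⟩ := hq
        exact absurd ⟨h1, h3⟩ h
      · omega
    · rintro ⟨⟨h1, h2⟩, h3⟩
      exact ⟨⟨h1, by omega⟩, h3⟩

lemma R_next {D : Set (ℕ × ℕ)} {M : ℕ} (hM : ∀ p ∈ D, p.2 < M) (T : ℕ × ℕ → ℕ) (i v : ℕ) :
    R D T (i + 1) M v = R D T i 0 v := by
  unfold R
  congr 1
  ext p
  simp only [readUpTo, Set.mem_ofPred_eq]
  constructor
  · rintro ⟨⟨h1, h2⟩, h3⟩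
    have := hM p h1
    exact ⟨⟨h1, by omega⟩, h3⟩
  · rintro ⟨⟨h1, h2⟩, h3⟩
    exact ⟨⟨h1, by omega⟩, h3⟩

lemma R_zero {D : Set (ℕ × ℕ)} {M : ℕ} (hM : ∀ p ∈ D, p.2 < M) (T : ℕ × ℕ → ℕ) (v : ℕ) :
    R D T 0 M v = 0 := by
  unfold R
  convert Set.ncard_empty (ℕ × ℕ)
  ext p
  simp only [readUpTo, Set.mem_ofPred_eq, Set.mem_empty_iff_false, iff_false]
  rintro ⟨⟨h1, h2⟩, h3⟩
  have := hM p h1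
  omega

lemma content_eq_R {D : Set (ℕ × ℕ)} {N : ℕ} (hN : ∀ p ∈ D, p.1 ≤ N) (T : ℕ × ℕ → ℕ) (v : ℕ) :
    contentOf D T v = R D T N 0 v := by
  unfold R contentOf
  congr 1
  ext p
  simp only [readUpTo, Set.mem_ofPred_eq]
  constructor
  · rintro ⟨h1, h3⟩
    have := hN p h1
    exact ⟨⟨h1, by omega⟩, h3⟩
  · rintro ⟨⟨h1, h2⟩, h3⟩
    exact ⟨h1, h3⟩

open Classical in
lemma R_row {D : Set (ℕ × ℕ)} (hD : D.Finite) (T : ℕ × ℕ → ℕ) (i v : ℕ) {j M : ℕ} (hj : j ≤ M) :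
    R D T i j v = R D T i M v + #{q ∈ Ico j M | (i, q) ∈ D ∧ T (i, q) = v} := by
  induction hj using Nat.decreasingInduction with
  | self => simp
  | of_succ j hj ih =>
    rw [R_step hD, ih, ← Finset.insert_Ico_add_one_left_eq_Ico hj, Finset.filter_insert]
    split_ifs with h
    · rw [Finset.card_insert_of_notMem (by simp)]; ring
    · rfl

lemma card_fiber {s : Finset ℕ} {f : ℕ → ℕ} (hf : Set.InjOn f s) (v : ℕ) :
    #{x ∈ s | f x = v} = if v ∈ s.image f then 1 else 0 := by
  split_ifs with h
  · obtain ⟨x, hx, rfl⟩ := Finset.mem_image.1 h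
    rw [Finset.card_eq_one]
    refine ⟨x, ?_⟩
    ext y
    simp only [Finset.mem_filter, Finset.mem_singleton]
    constructor
    · rintro ⟨hy, hxy⟩
      exact hf hy hx hxy
    · rintro rfl
      exact ⟨hx, rfl⟩
  · rw [Finset.card_eq_zero, Finset.filter_eq_empty_iff]
    intro x hx hxv
    exact h (Finset.mem_image.2 ⟨x, hx, hxv⟩)

/-! ### The shape and its staircase part -/

lemma mem_SBF {n k a b : ℕ} (hk : k ≤ 1) (i j : ℕ) :
    (i, j) ∈ SBF (hookFun a (b + 1)) k n ↔
      (i < n ∧ k + n ≤ i + j + 1 ∧ j < n + k) ∨ (i = n ∧ j < a) ∨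
        (n < i ∧ i ≤ n + b ∧ j = 0) := by
  simp only [SBF, staircaseCells, foundationCells, hookFun, Set.mem_union, Set.mem_ofPred_eq]
  split_ifs <;> omega

lemma SBF_col {n k a b : ℕ} (hn : 1 ≤ n) (hk : k ≤ 1) (ha : a ≤ n + k) :
    ∀ p ∈ SBF (hookFun a (b + 1)) k n, p.2 < n + k := by
  rintro ⟨i, j⟩ h
  rw [mem_SBF hk] at h
  simp only
  omega

lemma SBF_rows {n k a b : ℕ} (hk : k ≤ 1) :
    ∀ p ∈ SBF (hookFun a (b + 1)) k n, p.1 ≤ n + b := by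
  rintro ⟨i, j⟩ h
  rw [mem_SBF hk] at h
  simp only
  omega

lemma SBF_finite {n k a b : ℕ} (hn : 1 ≤ n) (hk : k ≤ 1) (ha : a ≤ n + k) :
    (SBF (hookFun a (b + 1)) k n).Finite :=
  (Finset.finite_toSet (range (n + b + 1) ×ˢ range (n + k))).subset fun p hp => by
    have h1 := SBF_col hn hk ha p hp
    have h2 := SBF_rows hk p hp
    simp
    omega

/-- Counts inside staircase row `i`, when that row reads `1, 2, …, i + 1` from column `j` on and the
preceding rows contain each `v` exactly `i + 1 - v` times. -/
lemma R_stair {n k a b i : ℕ} {T : ℕ × ℕ → ℕ} (hn : 1 ≤ n) (hk : k ≤ 1) (ha : a ≤ n + k)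
    (hi : i < n)
    (hR : ∀ v, 1 ≤ v → R (SBF (hookFun a (b + 1)) k n) T i (n + k) v = i + 1 - v)
    {j : ℕ} (hj : j ≤ n + k)
    (hT : ∀ q, j ≤ q → k + n ≤ i + q + 1 → q < n + k → T (i, q) + k + n = i + q + 2)
    {v : ℕ} (hv : 1 ≤ v) :
    R (SBF (hookFun a (b + 1)) k n) T i j v =
      (i + 1 - v) + if i + j + 2 ≤ v + k + n ∧ v ≤ i + 1 then 1 else 0 := by
  classical
  induction hj using Nat.decreasingInduction with
  | self => rw [hR v hv, if_neg (by omega)]; rfl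
  | of_succ j hj ih =>
    rw [R_step (SBF_finite hn hk ha), ih fun q hq => hT q (by omega), mem_SBF hk]
    have := hT j le_rfl
    split_ifs <;> omega

lemma R_stair_next {n k a b i : ℕ} {T : ℕ × ℕ → ℕ} (hn : 1 ≤ n) (hk : k ≤ 1) (ha : a ≤ n + k)
    (hi : i < n)
    (hR : ∀ v, 1 ≤ v → R (SBF (hookFun a (b + 1)) k n) T i (n + k) v = i + 1 - v)
    (hT : ∀ q, k + n ≤ i + q + 1 → q < n + k → T (i, q) + k + n = i + q + 2)
    {v : ℕ} (hv : 1 ≤ v) :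
    R (SBF (hookFun a (b + 1)) k n) T (i + 1) (n + k) v = i + 1 + 1 - v := by
  rw [R_next (SBF_col hn hk ha), R_stair hn hk ha hi hR (Nat.zero_le _) (fun q _ => hT q) hv]
  split_ifs <;> omega

/-- If the staircase is filled canonically (row `i` reads `1, 2, …, i + 1`), the rows above row `i`
have content `δ_i`; in particular the whole staircase has content `δ_n`. -/
lemma R_stair_start {n k a b : ℕ} {T : ℕ × ℕ → ℕ} (hn : 1 ≤ n) (hk : k ≤ 1) (ha : a ≤ n + k)
    (hT : ∀ i q, i < n → k + n ≤ i + q + 1 → q < n + k → T (i, q) + k + n = i + q + 2)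
    {i : ℕ} (hi : i ≤ n) {v : ℕ} (hv : 1 ≤ v) :
    R (SBF (hookFun a (b + 1)) k n) T i (n + k) v = i + 1 - v := by
  induction i generalizing v with
  | zero => rw [R_zero (SBF_col hn hk ha)]; omega
  | succ i ih =>
    exact R_stair_next hn hk ha hi (fun v hv => ih (by omega) hv) (fun q => hT i q hi) hv

/-- A Littlewood-Richardson tableau fills the staircase part canonically: column-strictness bounds
each entry from below, the lattice condition from above. -/
lemma stair_forced {n k a b : ℕ} {T : ℕ × ℕ → ℕ} (hn : 1 ≤ n) (hk : k ≤ 1) (ha : a ≤ n + k)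
    (hS : IsSSYT (SBF (hookFun a (b + 1)) k n) T)
    (hL : IsLattice (SBF (hookFun a (b + 1)) k n) T) :
    ∀ i q, i < n → k + n ≤ i + q + 1 → q < n + k → T (i, q) + k + n = i + q + 2 := by
  obtain ⟨hpos, -, hrow, hcol⟩ := hS
  have main : ∀ i, i ≤ n →
      (∀ v, 1 ≤ v → R (SBF (hookFun a (b + 1)) k n) T i (n + k) v = i + 1 - v) ∧
      ∀ i' q, i' < i → k + n ≤ i' + q + 1 → q < n + k → T (i', q) + k + n = i' + q + 2 := by
    intro i
    induction i with
    | zero =>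
      refine fun _ => ⟨fun v hv => ?_, fun i' q h => absurd h (by omega)⟩
      rw [R_zero (SBF_col hn hk ha)]; omega
    | succ i ih =>
      intro hi
      obtain ⟨hR, hT⟩ := ih (by omega)
      have hrowi : ∀ j, j ≤ n + k → ∀ q, j ≤ q → k + n ≤ i + q + 1 → q < n + k →
          T (i, q) + k + n = i + q + 2 := by
        intro j hj
        induction hj using Nat.decreasingInduction with
        | self => intro q h1 h2 h3; omega
        | of_succ j hj ihj =>
          intro q h1 h2 h3
          rcases Nat.lt_or_ge j q with h | h
          · exact ihj q h h2 h3
          obtain rfl : j = q := by omega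
          have hmem : (i, j) ∈ SBF (hookFun a (b + 1)) k n := (mem_SBF hk i j).2 (by omega)
          have hp := hpos _ hmem
          have hlow : i + j + 2 ≤ T (i, j) + k + n := by
            rcases Nat.lt_or_ge (i + j + 1) (k + n + 1) with h4 | h4
            · omega
            obtain ⟨i', rfl⟩ : ∃ i', i = i' + 1 := ⟨i - 1, by omega⟩
            have h5 := hT i' j (by omega) (by omega) h3
            have := hcol i' (i' + 1) j (by omega) ((mem_SBF hk _ _).2 (by omega)) hmem
            omega
          by_contra hne
          have hlat := hL _ hmem (T (i, j) - 1) (by omega)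
          rw [Nat.sub_add_cancel hp] at hlat
          change R _ T i j _ ≤ R _ T i j _ at hlat
          classical
          rw [R_step (SBF_finite hn hk ha), R_step (SBF_finite hn hk ha) T i j (T (i, j) - 1),
            R_stair hn hk ha (by omega) hR (by omega) (fun q hq => ihj q hq) (by omega),
            R_stair hn hk ha (by omega) hR (by omega) (fun q hq => ihj q hq) (by omega),
            if_pos (⟨hmem, rfl⟩ : _ ∧ _), if_neg (fun h : _ ∧ T (i, j) = T (i, j) - 1 => by omega)]
            at hlat
          have hup : j + 1 < n + k → T (i, j) + k + n ≤ i + j + 3 := by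
            intro h6
            have h7 := ihj (j + 1) le_rfl (by omega) h6
            have := hrow i j (j + 1) (by omega) hmem ((mem_SBF hk _ _).2 (by omega))
            omega
          split_ifs at hlat <;> omega
      refine ⟨fun v hv => R_stair_next hn hk ha hi hR (fun q => hrowi 0 (by omega) q (by omega)) hv,
        fun i' q h1 h2 h3 => ?_⟩
      rcases Nat.lt_or_ge i' i with h | h
      · exact hT i' q h h2 h3
      · obtain rfl : i' = i := by omega
        exact hrowi 0 (by omega) q (by omega) h2 h3
  exact fun i q hi => (main n le_rfl).2 i q hi

/-! ### The foundation: tableaux versus pairs of value sets -/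

lemma R_row_end {n k a b : ℕ} (hn : 1 ≤ n) (hk : k ≤ 1) (ha : a ≤ n + k) (T : ℕ × ℕ → ℕ) (v : ℕ)
    {j : ℕ} (hj : j ≤ a) :
    R (SBF (hookFun a (b + 1)) k n) T n j v =
      R (SBF (hookFun a (b + 1)) k n) T n (n + k) v + #{q ∈ Ico j a | T (n, q) = v} := by
  classical
  rw [R_row (SBF_finite hn hk ha) T n v (hj.trans ha)]
  congr 2
  ext q
  simp only [Finset.mem_filter, Finset.mem_Ico]
  constructor
  · rintro ⟨h1, h2, h3⟩
    rw [mem_SBF hk] at h2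
    exact ⟨by omega, h3⟩
  · rintro ⟨h1, h3⟩
    exact ⟨by omega, (mem_SBF hk _ _).2 (by omega), h3⟩

lemma R_col {n k a b : ℕ} (hn : 1 ≤ n) (hk : k ≤ 1) (ha : a ≤ n + k) (T : ℕ × ℕ → ℕ) (v : ℕ)
    {i : ℕ} (hi : i ≤ b) :
    R (SBF (hookFun a (b + 1)) k n) T (n + i) 0 v =
      R (SBF (hookFun a (b + 1)) k n) T n 0 v + #{s ∈ range i | T (n + 1 + s, 0) = v} := by
  classical
  induction i with
  | zero => simp
  | succ i ih =>
    rw [R_step (SBF_finite hn hk ha), R_row (SBF_finite hn hk ha) T _ v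
      (show 0 + 1 ≤ n + k by omega), ← add_assoc, R_next (SBF_col hn hk ha), ih (by omega),
      Finset.range_add_one, Finset.filter_insert]
    have h0 : #{q ∈ Ico (0 + 1) (n + k) | (n + i + 1, q) ∈ SBF (hookFun a (b + 1)) k n ∧
        T (n + i + 1, q) = v} = 0 := by
      rw [Finset.card_eq_zero, Finset.filter_eq_empty_iff]
      intro q hq h
      rw [mem_SBF hk, Finset.mem_Ico] at *
      omega
    have hm : (n + i + 1, 0) ∈ SBF (hookFun a (b + 1)) k n := (mem_SBF hk _ _).2 (by omega)
    have he : n + 1 + i = n + i + 1 := by omega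
    rw [h0, he]
    by_cases h : T (n + i + 1, 0) = v
    · rw [if_pos ⟨hm, h⟩, if_pos h, Finset.card_insert_of_notMem (by simp)]
      ring
    · rw [if_neg (fun h' => h h'.2), if_neg h, add_zero, add_zero]

/-- The indicator function of `s`. -/
def ind (s : Finset ℕ) (v : ℕ) : ℕ := if v ∈ s then 1 else 0

/-- Admissible pairs: the value sets `X` of the row and `Y` of the leg (corner excluded) of the
foundation in a Littlewood-Richardson tableau of content `nu` for the hook with row length `a` and
leg length `b + 1`.  The field `lattice` says that each leg entry `y` can be appended; since the leg
is read downwards, an entry `y - 1` of `Y` has been read before `y`. -/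
structure Adm (n k a b : ℕ) (nu : ℕ → ℕ) (X Y : Finset ℕ) : Prop where
  range : ∀ x ∈ X, 2 ≤ x + k ∧ x ≤ n + 1
  cardX : #X = a
  cardY : #Y = b
  above : ∀ y ∈ Y, ∃ x ∈ X, x < y
  lattice : ∀ y ∈ Y, (n + 1 - y) + ind X y + 1 ≤ (n + 1 - (y - 1)) + ind X (y - 1) + ind Y (y - 1)
  content : ∀ v, 1 ≤ v → nu v = (n + 1 - v) + ind X v + ind Y v

/-- The set of values of `T` in the first row (row `n`) of the foundation. -/
def rowSet (T : ℕ × ℕ → ℕ) (n a : ℕ) : Finset ℕ := (range a).image fun q => T (n, q)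

/-- The set of values of `T` in the leg of the foundation, without the corner. -/
def colSet (T : ℕ × ℕ → ℕ) (n b : ℕ) : Finset ℕ := (range b).image fun s => T (n + 1 + s, 0)

lemma injOn_of_mono {f : ℕ → ℕ} {a : ℕ} (hf : ∀ i j, i < j → j < a → f i < f j) {s : Finset ℕ}
    (hs : ∀ x ∈ s, x < a) : Set.InjOn f s := by
  intro x hx y hy hxy
  have h1 := hs x hx
  have h2 := hs y hy
  rcases Nat.lt_trichotomy x y with h | h | h
  · have := hf x y h h2; omega
  · exact h
  · have := hf y x h h1; omega

lemma enum_unique {f g : ℕ → ℕ} {a : ℕ} (hf : ∀ i j, i < j → j < a → f i < f j)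
    (hg : ∀ i j, i < j → j < a → g i < g j) (h : (range a).image f = (range a).image g) :
    ∀ j, j < a → f j = g j := by
  have hc : #((range a).image f) = a := by
    rw [Finset.card_image_of_injOn (injOn_of_mono hf (by simp)), Finset.card_range]
  have h1 := Finset.orderEmbOfFin_unique hc (f := fun i : Fin a => f i)
    (fun x => Finset.mem_image_of_mem _ (by simp)) (fun x y hxy => hf _ _ hxy y.2)
  have h2 := Finset.orderEmbOfFin_unique hc (f := fun i : Fin a => g i)
    (fun x => by rw [h]; exact Finset.mem_image_of_mem _ (by simp)) (fun x y hxy => hg _ _ hxy y.2)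
  intro j hj
  exact congrFun (h1.trans h2.symm) ⟨j, hj⟩

lemma enum_exists (X : Finset ℕ) : ∃ f : ℕ → ℕ, (∀ i j, i < j → j < #X → f i < f j) ∧
    (range #X).image f = X := by
  obtain ⟨f, key⟩ : ∃ f : ℕ → ℕ, ∀ i (h : i < #X), f i = X.orderEmbOfFin rfl ⟨i, h⟩ :=
    ⟨fun i => if h : i < #X then X.orderEmbOfFin rfl ⟨i, h⟩ else 0, fun i h => dif_pos h⟩
  refine ⟨f, ?_, ?_⟩
  · intro i j hij hj
    rw [key i (hij.trans hj), key j hj]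
    exact (X.orderEmbOfFin rfl).strictMono hij
  · refine Finset.eq_of_subset_of_card_le ?_ ?_
    · intro x hx
      obtain ⟨i, hi, rfl⟩ := Finset.mem_image.1 hx
      rw [key i (Finset.mem_range.1 hi)]
      exact Finset.orderEmbOfFin_mem _ _ _
    · rw [Finset.card_image_of_injOn, Finset.card_range]
      refine injOn_of_mono (a := #X) ?_ (by simp)
      intro i j hij hj
      rw [key i (hij.trans hj), key j hj]
      exact (X.orderEmbOfFin rfl).strictMono hij

/-- Fillings with canonical staircase part whose foundation has strictly increasing row and leg.
Such a filling is determined by its `rowSet` and `colSet`. -/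
structure Shaped (n k a b : ℕ) (T : ℕ × ℕ → ℕ) : Prop where
  stair : ∀ i q, i < n → k + n ≤ i + q + 1 → q < n + k → T (i, q) + k + n = i + q + 2
  row : ∀ i j, i < j → j < a → T (n, i) < T (n, j)
  col : ∀ i j, i < j → j < b → T (n + 1 + i, 0) < T (n + 1 + j, 0)
  zero : ∀ p, p ∉ SBF (hookFun a (b + 1)) k n → T p = 0

lemma Shaped.R_row {n k a b : ℕ} {T : ℕ × ℕ → ℕ} (h : Shaped n k a b T) (hn : 1 ≤ n) (hk : k ≤ 1)
    (ha : a ≤ n + k) {j : ℕ} (hj : j ≤ a) {v : ℕ} (hv : 1 ≤ v) :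
    R (SBF (hookFun a (b + 1)) k n) T n j v =
      (n + 1 - v) + ind ((Ico j a).image fun q => T (n, q)) v := by
  rw [R_row_end hn hk ha T v hj, R_stair_start hn hk ha h.stair le_rfl hv,
    card_fiber (injOn_of_mono h.row (by simp))]
  rfl

lemma Shaped.R_col {n k a b : ℕ} {T : ℕ × ℕ → ℕ} (h : Shaped n k a b T) (hn : 1 ≤ n) (hk : k ≤ 1)
    (ha : a ≤ n + k) {i : ℕ} (hi : i ≤ b) {v : ℕ} (hv : 1 ≤ v) :
    R (SBF (hookFun a (b + 1)) k n) T (n + i) 0 v =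
      (n + 1 - v) + ind (rowSet T n a) v +
        ind ((range i).image fun s => T (n + 1 + s, 0)) v := by
  rw [HookSBF.R_col hn hk ha T v hi, h.R_row hn hk ha (Nat.zero_le _) hv,
    card_fiber (injOn_of_mono h.col (fun x hx => by rw [Finset.mem_range] at hx; omega)),
    ← Finset.range_eq_Ico]
  rfl

lemma Shaped.content {n k a b : ℕ} {T : ℕ × ℕ → ℕ} (h : Shaped n k a b T) (hn : 1 ≤ n) (hk : k ≤ 1)
    (ha : a ≤ n + k) {v : ℕ} (hv : 1 ≤ v) :
    contentOf (SBF (hookFun a (b + 1)) k n) T v =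
      (n + 1 - v) + ind (rowSet T n a) v + ind (colSet T n b) v := by
  rw [content_eq_R (SBF_rows hk), h.R_col hn hk ha le_rfl hv]
  rfl

lemma row_lower {n k a b : ℕ} {T : ℕ × ℕ → ℕ} (hn : 1 ≤ n) (hk : k ≤ 1) (ha : a ≤ n + k)
    (hS : IsSSYT (SBF (hookFun a (b + 1)) k n) T)
    (hst : ∀ i q, i < n → k + n ≤ i + q + 1 → q < n + k → T (i, q) + k + n = i + q + 2)
    {j : ℕ} (hj : j < a) : j + 2 ≤ T (n, j) + k := by
  have hm : (n, j) ∈ SBF (hookFun a (b + 1)) k n := (mem_SBF hk _ _).2 (by omega)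
  have hp := hS.1 _ hm
  rcases Nat.lt_or_ge j k with h | h
  · omega
  · have h1 := hst (n - 1) j (by omega) (by omega) (by omega)
    have h2 := hS.2.2.2 (n - 1) n j (by omega) ((mem_SBF hk _ _).2 (by omega)) hm
    omega

/-- Since the staircase has content `δ_n`, the lattice condition allows each value `v ≥ 2` at most
once in the foundation row, and none above `n + 1`; the value `1` is limited by the staircase row
above. -/
lemma shaped_of_LR {n k a b : ℕ} {T : ℕ × ℕ → ℕ} (hn : 1 ≤ n) (hk : k ≤ 1) (ha : a ≤ n + k)
    (hS : IsSSYT (SBF (hookFun a (b + 1)) k n) T)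
    (hL : IsLattice (SBF (hookFun a (b + 1)) k n) T) :
    Shaped n k a b T ∧ ∀ j, j < a → T (n, j) ≤ n + 1 := by
  have hst := stair_forced hn hk ha hS hL
  have hlow := fun j (hj : j < a) => row_lower hn hk ha hS hst hj
  have hmem : ∀ j, j < a → (n, j) ∈ SBF (hookFun a (b + 1)) k n :=
    fun j hj => (mem_SBF hk _ _).2 (by omega)
  have hmono : ∀ i j, i ≤ j → j < a → T (n, i) ≤ T (n, j) := fun i j hij hj =>
    hS.2.2.1 n i j hij (hmem i (by omega)) (hmem j hj)
  have key : ∀ j, j < a → 2 ≤ T (n, j) →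
      (n + 1 - T (n, j)) + #{q ∈ Ico j a | T (n, q) = T (n, j)} ≤ n + 1 - (T (n, j) - 1) := by
    intro j hj h2
    have hlat := hL _ (hmem j hj) (T (n, j) - 1) (by omega)
    rw [Nat.sub_add_cancel (by omega)] at hlat
    change R _ T n j _ ≤ R _ T n j _ at hlat
    rw [R_row_end hn hk ha T _ hj.le, R_row_end hn hk ha T _ hj.le,
      R_stair_start hn hk ha hst le_rfl (by omega),
      R_stair_start hn hk ha hst le_rfl (by omega)] at hlat
    have h0 : #{q ∈ Ico j a | T (n, q) = T (n, j) - 1} = 0 := by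
      rw [Finset.card_eq_zero, Finset.filter_eq_empty_iff]
      intro q hq h
      rw [Finset.mem_Ico] at hq
      have := hmono j q hq.1 hq.2
      omega
    omega
  refine ⟨⟨hst, ?_, ?_, hS.2.1⟩, ?_⟩
  · intro i j hij hj
    refine lt_of_le_of_ne (hmono i j hij.le hj) fun heq => ?_
    have h1 := hlow j hj
    have h2 := key i (by omega) (by omega)
    have h3 : #({i, j} : Finset ℕ) ≤ #{q ∈ Ico i a | T (n, q) = T (n, i)} := by
      refine Finset.card_le_card fun q hq => ?_
      rw [Finset.mem_insert, Finset.mem_singleton] at hq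
      rw [Finset.mem_filter, Finset.mem_Ico]
      rcases hq with rfl | rfl
      · exact ⟨by omega, rfl⟩
      · exact ⟨by omega, heq.symm⟩
    rw [Finset.card_pair hij.ne] at h3
    omega
  · intro i j hij hj
    exact hS.2.2.2 _ _ 0 (by omega) ((mem_SBF hk _ _).2 (by omega)) ((mem_SBF hk _ _).2 (by omega))
  · intro j hj
    by_contra hgt
    have h2 := key j hj (by omega)
    have h3 : 0 < #{q ∈ Ico j a | T (n, q) = T (n, j)} :=
      Finset.card_pos.2 ⟨j, by rw [Finset.mem_filter, Finset.mem_Ico]; exact ⟨by omega, rfl⟩⟩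
    omega

lemma adm_of_LR {n k a b : ℕ} {nu : ℕ → ℕ} {T : ℕ × ℕ → ℕ} (hn : 1 ≤ n) (hk : k ≤ 1) (ha1 : 1 ≤ a)
    (ha : a ≤ n + k)
    (hS : IsSSYT (SBF (hookFun a (b + 1)) k n) T)
    (hL : IsLattice (SBF (hookFun a (b + 1)) k n) T)
    (hC : ∀ v, 1 ≤ v → contentOf (SBF (hookFun a (b + 1)) k n) T v = nu v) :
    Adm n k a b nu (rowSet T n a) (colSet T n b) := by
  obtain ⟨hsh, hup⟩ := shaped_of_LR hn hk ha hS hL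
  have habove : ∀ s, s < b → T (n, 0) < T (n + 1 + s, 0) := fun s hs =>
    hS.2.2.2 n (n + 1 + s) 0 (by omega) ((mem_SBF hk _ _).2 (by omega))
      ((mem_SBF hk _ _).2 (by omega))
  have hlow := fun j (hj : j < a) => row_lower hn hk ha hS hsh.stair hj
  refine ⟨?_, ?_, ?_, ?_, ?_, ?_⟩
  · intro x hx
    obtain ⟨j, hj, rfl⟩ := Finset.mem_image.1 hx
    rw [Finset.mem_range] at hj
    have := hlow j hj
    exact ⟨by omega, hup j hj⟩
  · rw [rowSet, Finset.card_image_of_injOn (injOn_of_mono hsh.row (by simp)), Finset.card_range]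
  · rw [colSet, Finset.card_image_of_injOn (injOn_of_mono hsh.col (by simp)), Finset.card_range]
  · intro y hy
    obtain ⟨s, hs, rfl⟩ := Finset.mem_image.1 hy
    exact ⟨T (n, 0), Finset.mem_image.2 ⟨0, Finset.mem_range.2 ha1, rfl⟩,
      habove s (Finset.mem_range.1 hs)⟩
  · intro y hy
    obtain ⟨s, hs, rfl⟩ := Finset.mem_image.1 hy
    rw [Finset.mem_range] at hs
    have h1 := habove s hs
    have h2 := hlow 0 ha1
    have hlat : R (SBF (hookFun a (b + 1)) k n) T (n + (s + 1)) 0 (T (n + 1 + s, 0)) ≤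
        R (SBF (hookFun a (b + 1)) k n) T (n + (s + 1)) 0 (T (n + 1 + s, 0) - 1) := by
      have h := hL (n + 1 + s, 0) ((mem_SBF hk _ _).2 (by omega)) (T (n + 1 + s, 0) - 1) (by omega)
      rw [Nat.sub_add_cancel (by omega)] at h
      rw [show n + (s + 1) = n + 1 + s by omega]
      exact h
    rw [hsh.R_col hn hk ha (i := s + 1) hs (by omega),
      hsh.R_col hn hk ha (i := s + 1) hs (by omega)] at hlat
    have e1 : ind ((range (s + 1)).image fun s => T (n + 1 + s, 0)) (T (n + 1 + s, 0)) = 1 :=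
      if_pos (Finset.mem_image.2 ⟨s, by simp, rfl⟩)
    have e2 : ind ((range (s + 1)).image fun s => T (n + 1 + s, 0)) (T (n + 1 + s, 0) - 1) ≤
        ind (colSet T n b) (T (n + 1 + s, 0) - 1) := by
      unfold ind
      split_ifs with h3 h4
      · exact le_rfl
      · exact absurd (Finset.image_subset_image (Finset.range_mono hs) h3) h4
      · omega
      · exact le_rfl
    omega
  · intro v hv
    rw [← hC v hv, hsh.content hn hk ha hv]

/-- The filling with canonical staircase part, foundation row `f 0, …, f (a - 1)` and leg
`g 0, …, g (b - 1)` below the corner. -/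
def fill (n k a b : ℕ) (f g : ℕ → ℕ) (p : ℕ × ℕ) : ℕ :=
  if p.1 < n ∧ k + n ≤ p.1 + p.2 + 1 ∧ p.2 < n + k then p.1 + p.2 + 2 - k - n
  else if p.1 = n ∧ p.2 < a then f p.2
  else if n < p.1 ∧ p.1 ≤ n + b ∧ p.2 = 0 then g (p.1 - n - 1)
  else 0

lemma fill_stair {n k a b : ℕ} {f g : ℕ → ℕ} {i j : ℕ}
    (h : i < n ∧ k + n ≤ i + j + 1 ∧ j < n + k) : fill n k a b f g (i, j) + k + n = i + j + 2 := by
  unfold fill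
  rw [if_pos h]
  simp only
  omega

lemma fill_row {n k a b : ℕ} {f g : ℕ → ℕ} {j : ℕ} (h : j < a) : fill n k a b f g (n, j) = f j := by
  unfold fill
  rw [if_neg (by simp), if_pos ⟨rfl, h⟩]

lemma fill_col {n k a b : ℕ} {f g : ℕ → ℕ} {s : ℕ} (h : s < b) :
    fill n k a b f g (n + 1 + s, 0) = g s := by
  unfold fill
  rw [if_neg (by simp only; omega), if_neg (by simp only; omega), if_pos ⟨by simp only; omega, by simp only; omega, rfl⟩]
  congr 1
  simp only
  omega

lemma fill_shaped {n k a b : ℕ} {f g : ℕ → ℕ} (hk : k ≤ 1)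
    (hf : ∀ i j, i < j → j < a → f i < f j) (hg : ∀ i j, i < j → j < b → g i < g j) :
    Shaped n k a b (fill n k a b f g) := by
  refine ⟨fun i q h1 h2 h3 => fill_stair ⟨h1, h2, h3⟩, ?_, ?_, ?_⟩
  · intro i j hij hj
    rw [fill_row (hij.trans hj), fill_row hj]
    exact hf i j hij hj
  · intro i j hij hj
    rw [fill_col (hij.trans hj), fill_col hj]
    exact hg i j hij hj
  · rintro ⟨i, j⟩ h
    rw [mem_SBF hk, not_or, not_or] at h
    unfold fill
    rw [if_neg h.1, if_neg h.2.1, if_neg h.2.2]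

lemma mono_le {f : ℕ → ℕ} {a c : ℕ} (hf : ∀ i j, i < j → j < a → f i < f j) (h0 : 0 < a → c ≤ f 0) :
    ∀ j, j < a → j + c ≤ f j := by
  intro j
  induction j with
  | zero => intro h; have := h0 h; omega
  | succ j ih =>
    intro h
    have := ih (by omega)
    have := hf j (j + 1) (by omega) h
    omega

lemma LR_of_adm {n k a b : ℕ} {nu : ℕ → ℕ} {T : ℕ × ℕ → ℕ} (hn : 1 ≤ n) (hk : k ≤ 1) (ha1 : 1 ≤ a)
    (ha : a ≤ n + k) (hsh : Shaped n k a b T)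
    (hA : Adm n k a b nu (rowSet T n a) (colSet T n b)) :
    IsSSYT (SBF (hookFun a (b + 1)) k n) T ∧ IsLattice (SBF (hookFun a (b + 1)) k n) T ∧
    ∀ v, 1 ≤ v → contentOf (SBF (hookFun a (b + 1)) k n) T v = nu v := by
  have hrow : ∀ j, j < a → 2 ≤ T (n, j) + k ∧ T (n, j) ≤ n + 1 := fun j hj =>
    hA.range _ (Finset.mem_image.2 ⟨j, by simpa using hj, rfl⟩)
  have hrow' : ∀ j, j < a → j + (2 - k) ≤ T (n, j) :=
    mono_le hsh.row fun h => by have := hrow 0 h; omega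
  have hcol0 : ∀ s, s < b → T (n, 0) < T (n + 1 + s, 0) := by
    intro s hs
    obtain ⟨x, hx, hlt⟩ := hA.above (T (n + 1 + s, 0))
      (Finset.mem_image.2 ⟨s, by simpa using hs, rfl⟩)
    obtain ⟨j, hj, rfl⟩ := Finset.mem_image.1 hx
    rcases Nat.eq_zero_or_pos j with rfl | h
    · exact hlt
    · exact (hsh.row 0 j h (by simpa using hj)).trans hlt
  have hrow0 := hrow 0 ha1
  -- cells of the leg, indexed by their offset below the corner
  have hoff : ∀ i, n < i → i ≤ n + b → ∃ s, s < b ∧ i = n + 1 + s := fun i h1 h2 =>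
    ⟨i - n - 1, by omega, by omega⟩
  refine ⟨⟨?_, hsh.zero, ?_, ?_⟩, ?_, ?_⟩
  · rintro ⟨i, j⟩ hp
    rw [mem_SBF hk] at hp
    rcases hp with h | ⟨rfl, h⟩ | ⟨h1, h2, rfl⟩
    · have := hsh.stair i j h.1 h.2.1 h.2.2
      omega
    · have := hrow j h
      omega
    · obtain ⟨s, hs, rfl⟩ := hoff i h1 h2
      have := hcol0 s hs
      omega
  · intro i j1 j2 hj h1 h2
    rw [mem_SBF hk] at h1 h2
    rcases Nat.lt_trichotomy i n with h | rfl | h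
    · have e1 := hsh.stair i j1 (by omega) (by omega) (by omega)
      have e2 := hsh.stair i j2 (by omega) (by omega) (by omega)
      omega
    · rcases Nat.eq_or_lt_of_le hj with rfl | hj
      · exact le_rfl
      · exact (hsh.row j1 j2 hj (by omega)).le
    · obtain ⟨rfl, rfl⟩ : j1 = 0 ∧ j2 = 0 := by omega
      exact le_rfl
  · intro i1 i2 j hi h1 h2
    rw [mem_SBF hk] at h1 h2
    rcases Nat.lt_trichotomy i1 n with h | rfl | h
    · have e1 := hsh.stair i1 j (by omega) (by omega) (by omega)
      rcases Nat.lt_trichotomy i2 n with h' | rfl | h'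
      · have e2 := hsh.stair i2 j (by omega) (by omega) (by omega)
        omega
      · have e2 := hrow' j (by omega)
        omega
      · obtain ⟨s, hs, rfl⟩ := hoff i2 h' (by omega)
        obtain rfl : j = 0 := by omega
        have := hcol0 s hs
        omega
    · obtain ⟨s, hs, rfl⟩ := hoff i2 (by omega) (by omega)
      obtain rfl : j = 0 := by omega
      exact hcol0 s hs
    · obtain ⟨s, hs, rfl⟩ := hoff i1 h (by omega)
      obtain ⟨s', hs', rfl⟩ := hoff i2 (by omega) (by omega)
      obtain rfl : j = 0 := by omega
      exact hsh.col s s' (by omega) hs'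
  · rintro ⟨i, j⟩ hp v hv
    change R _ T i j (v + 1) ≤ R _ T i j v
    rw [mem_SBF hk] at hp
    rcases hp with h | ⟨rfl, h⟩ | ⟨h1, h2, rfl⟩
    · have hR := fun v (hv : 1 ≤ v) => R_stair_start (b := b) hn hk ha hsh.stair h.1.le hv
      rw [R_stair hn hk ha h.1 hR (by omega) (fun q _ => hsh.stair i q h.1) (by omega),
        R_stair hn hk ha h.1 hR (by omega) (fun q _ => hsh.stair i q h.1) (by omega)]
      split_ifs <;> omega
    · rw [hsh.R_row hn hk ha h.le (by omega), hsh.R_row hn hk ha h.le hv]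
      unfold ind
      split_ifs with h1 h2 h2
      · omega
      · obtain ⟨q, hq, e⟩ := Finset.mem_image.1 h1
        rw [Finset.mem_Ico] at hq
        have := hrow q hq.2
        omega
      · omega
      · omega
    · obtain ⟨s, hs, rfl⟩ := hoff i h1 h2
      rw [show n + 1 + s = n + (s + 1) by omega, hsh.R_col hn hk ha (i := s + 1) hs (by omega),
        hsh.R_col hn hk ha (i := s + 1) hs (by omega)]
      have hX : ind (rowSet T n a) (v + 1) = 0 ∨ ind (rowSet T n a) (v + 1) = 1 ∧ v + 1 ≤ n + 1 := by
        unfold ind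
        split_ifs with h
        · exact Or.inr ⟨rfl, (hA.range _ h).2⟩
        · exact Or.inl rfl
      by_cases hY : v + 1 ∈ (range (s + 1)).image fun s => T (n + 1 + s, 0)
      · have e0 : ind ((range (s + 1)).image fun s => T (n + 1 + s, 0)) (v + 1) = 1 := if_pos hY
        obtain ⟨t, ht, e⟩ := Finset.mem_image.1 hY
        rw [Finset.mem_range] at ht
        have hl := hA.lattice (v + 1) (Finset.mem_image.2 ⟨t, Finset.mem_range.2 (by omega), e⟩)
        rw [Nat.add_sub_cancel] at hl
        have e2 : ind (colSet T n b) v ≤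
            ind ((range (s + 1)).image fun s => T (n + 1 + s, 0)) v := by
          unfold ind
          split_ifs with h3 h4
          · exact le_rfl
          · obtain ⟨t', ht', e'⟩ := Finset.mem_image.1 h3
            rw [Finset.mem_range] at ht'
            refine absurd (Finset.mem_image.2 ⟨t', ?_, e'⟩) h4
            rw [Finset.mem_range]
            by_contra hts
            have := hsh.col t t' (by omega) ht'
            omega
          · omega
          · exact le_rfl
        omega
      · have e0 : ind ((range (s + 1)).image fun s => T (n + 1 + s, 0)) (v + 1) = 0 := if_neg hY
        omega
  · intro v hv
    rw [hsh.content hn hk ha hv, hA.content v hv]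

/-- Sending a tableau to its row and leg value sets is a bijection onto the admissible pairs. -/
lemma LRcount_eq {n k a b : ℕ} (nu : ℕ → ℕ) (hn : 1 ≤ n) (hk : k ≤ 1) (ha1 : 1 ≤ a)
    (ha : a ≤ n + k) :
    LRcount (SBF (hookFun a (b + 1)) k n) nu =
      {p : Finset ℕ × Finset ℕ | Adm n k a b nu p.1 p.2}.ncard := by
  refine Set.ncard_congr (fun T _ => (rowSet T n a, colSet T n b)) ?_ ?_ ?_
  · rintro T ⟨hS, hL, hC⟩
    exact adm_of_LR hn hk ha1 ha hS hL hC
  · rintro T T' ⟨hS, hL, -⟩ ⟨hS', hL', -⟩ heq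
    rw [Prod.mk.injEq] at heq
    obtain ⟨hsh, -⟩ := shaped_of_LR hn hk ha hS hL
    obtain ⟨hsh', -⟩ := shaped_of_LR hn hk ha hS' hL'
    ext ⟨i, j⟩
    by_cases hp : (i, j) ∈ SBF (hookFun a (b + 1)) k n
    · rw [mem_SBF hk] at hp
      rcases hp with h | ⟨rfl, h⟩ | ⟨h1, h2, rfl⟩
      · have e1 := hsh.stair i j h.1 h.2.1 h.2.2
        have e2 := hsh'.stair i j h.1 h.2.1 h.2.2
        omega
      · exact enum_unique hsh.row hsh'.row heq.1 j h
      · obtain ⟨s, hs, rfl⟩ : ∃ s, s < b ∧ i = n + 1 + s := ⟨i - n - 1, by omega, by omega⟩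
        exact enum_unique hsh.col hsh'.col heq.2 s hs
    · rw [hsh.zero _ hp, hsh'.zero _ hp]
  · rintro ⟨X, Y⟩ hA
    have hA : Adm n k a b nu X Y := hA
    obtain ⟨f, hf, hfX⟩ := enum_exists X
    obtain ⟨g, hg, hgY⟩ := enum_exists Y
    rw [hA.cardX] at hf hfX
    rw [hA.cardY] at hg hgY
    have hsh : Shaped n k a b (fill n k a b f g) := fill_shaped hk hf hg
    have hX : rowSet (fill n k a b f g) n a = X := by
      rw [← hfX]
      exact Finset.image_congr fun q hq => fill_row (by simpa using hq)
    have hY : colSet (fill n k a b f g) n b = Y := by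
      rw [← hgY]
      exact Finset.image_congr fun q hq => fill_col (by simpa using hq)
    refine ⟨fill n k a b f g, LR_of_adm hn hk ha1 ha hsh (by rwa [hX, hY]), ?_⟩
    rw [hX, hY]

/-! ### Counting admissible pairs -/

/-- Unimodality of a row of Pascal's triangle, together with its symmetry. -/
lemma choose_unimodal {e s q : ℕ} (h1 : s ≤ q) (h2 : q + s ≤ e) : e.choose s ≤ e.choose q := by
  have aux : ∀ q, s ≤ q → q ≤ e / 2 → e.choose s ≤ e.choose q := by
    intro q hq
    induction q, hq using Nat.le_induction with
    | base => exact fun _ => le_rfl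
    | succ q _ ih =>
      exact fun h => (ih (by omega)).trans (Nat.choose_le_succ_of_lt_half_left (by omega))
  rcases le_or_gt q (e / 2) with h | h
  · exact aux q h1 h
  · rw [← Nat.choose_symm (show q ≤ e by omega)]
    exact aux (e - q) (by omega) (by omega)

/-- The content fixes the multiset union of the two value sets of an admissible pair. -/
lemma Adm.ind_add {n k a b a' b' : ℕ} {nu : ℕ → ℕ} {X Y X' Y' : Finset ℕ} (hk : k ≤ 1)
    (h : Adm n k a b nu X Y) (h' : Adm n k a' b' nu X' Y') (v : ℕ) :
    ind X v + ind Y v = ind X' v + ind Y' v := by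
  rcases Nat.eq_zero_or_pos v with rfl | hv
  · have aux : ∀ {a b X Y}, Adm n k a b nu X Y → ind X 0 + ind Y 0 = 0 := by
      intro a b X Y h
      have h1 : 0 ∉ X := fun h0 => by have := h.range 0 h0; omega
      have h2 : 0 ∉ Y := fun h0 => by obtain ⟨x, -, hx⟩ := h.above 0 h0; omega
      simp [ind, h1, h2]
    rw [aux h, aux h']
  · have h1 := h.content v hv
    have h2 := h'.content v hv
    omega

lemma mem_of_ind_add {X Y X' Y' : Finset ℕ} {v : ℕ}
    (h : ind X v + ind Y v = ind X' v + ind Y' v) :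
    ((v ∈ X ∨ v ∈ Y) ↔ (v ∈ X' ∨ v ∈ Y')) ∧ ((v ∈ X ∧ v ∈ Y) ↔ (v ∈ X' ∧ v ∈ Y')) := by
  unfold ind at h
  split_ifs at h <;> simp_all

/-- The free values of an admissible pair `(X, Y)` with minimum `m`: those at most `n + 1`, other
than `m`, that lie in exactly one of `X` and `Y`.  Each of them can be put into either set
without changing the content or the admissibility conditions. -/
def free (n m : ℕ) (X Y : Finset ℕ) : Finset ℕ :=
  {v ∈ (X ∪ Y) \ (X ∩ Y) | v ≤ n + 1 ∧ v ≠ m}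

lemma mem_free {n m : ℕ} {X Y : Finset ℕ} {v : ℕ} :
    v ∈ free n m X Y ↔ ((v ∈ X ∨ v ∈ Y) ∧ ¬ (v ∈ X ∧ v ∈ Y)) ∧ v ≤ n + 1 ∧ v ≠ m := by
  simp only [free, Finset.mem_filter, Finset.mem_sdiff, Finset.mem_union, Finset.mem_inter]

lemma Adm.exists_min {n k a b : ℕ} {nu : ℕ → ℕ} {X Y : Finset ℕ} (ha : 1 ≤ a)
    (h : Adm n k a b nu X Y) : ∃ m ∈ X, (∀ x ∈ X, m ≤ x) ∧ ∀ y ∈ Y, m < y := by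
  have hne : X.Nonempty := Finset.card_pos.1 (by rw [h.cardX]; omega)
  refine ⟨X.min' hne, X.min'_mem hne, fun x hx => X.min'_le x hx, fun y hy => ?_⟩
  obtain ⟨x, hx, hlt⟩ := h.above y hy
  exact (X.min'_le x hx).trans_lt hlt

/-- The smallest value occurring in the foundation always sits in the corner of the hook. -/
lemma Adm.min_mem {n k a b a' b' : ℕ} {nu : ℕ → ℕ} {X Y X' Y' : Finset ℕ} {m : ℕ} (hk : k ≤ 1)
    (h : Adm n k a b nu X Y) (h' : Adm n k a' b' nu X' Y') (hmX : m ∈ X)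
    (hx : ∀ x ∈ X, m ≤ x) (hy : ∀ y ∈ Y, m < y) : m ∈ X' ∧ m ∉ Y' := by
  have hnot : m ∉ Y' := by
    intro hm
    obtain ⟨x, hx', hlt⟩ := h'.above m hm
    rcases (mem_of_ind_add (h.ind_add hk h' x)).1.2 (Or.inl hx') with h1 | h1
    · have := hx x h1; omega
    · have := hy x h1; omega
  exact ⟨((mem_of_ind_add (h.ind_add hk h' m)).1.1 (Or.inl hmX)).resolve_right hnot, hnot⟩

/-- Among admissible pairs of given content, the row set is determined by the free values it
contains: the minimum and all repeated values are forced into it, and values above `n + 1` are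
forced out of it. -/
lemma Adm.mem_iff {n k a b a' b' : ℕ} {nu : ℕ → ℕ} {X Y X' Y' : Finset ℕ} {m : ℕ} (hk : k ≤ 1)
    (h : Adm n k a b nu X Y) (h' : Adm n k a' b' nu X' Y') (hmX : m ∈ X)
    (hx : ∀ x ∈ X, m ≤ x) (hy : ∀ y ∈ Y, m < y) (v : ℕ) :
    v ∈ X' ↔ v = m ∨ v ∈ X ∩ Y ∨ v ∈ X' ∩ free n m X Y := by
  have h1 := mem_of_ind_add (h.ind_add hk h' v)
  have h2 := (h.min_mem hk h' hmX hx hy).1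
  simp only [Finset.mem_inter, mem_free]
  constructor
  · intro hv
    have := (h'.range v hv).2
    tauto
  · rintro (rfl | hv | hv)
    · exact h2
    · exact (h1.2.1 hv).1
    · exact hv.1

lemma Adm.card_eq {n k a b a' b' : ℕ} {nu : ℕ → ℕ} {X Y X' Y' : Finset ℕ} {m : ℕ} (hk : k ≤ 1)
    (h : Adm n k a b nu X Y) (h' : Adm n k a' b' nu X' Y') (hmX : m ∈ X)
    (hx : ∀ x ∈ X, m ≤ x) (hy : ∀ y ∈ Y, m < y) :
    a' = 1 + #(X ∩ Y) + #(X' ∩ free n m X Y) := by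
  have e : X' = insert m ((X ∩ Y) ∪ (X' ∩ free n m X Y)) := by
    ext v
    rw [h.mem_iff hk h' hmX hx hy v, Finset.mem_insert, Finset.mem_union]
  have hm : m ∉ (X ∩ Y) ∪ (X' ∩ free n m X Y) := by
    have : m ∉ Y := fun hm => (hy m hm).false
    simp [mem_free, this]
  have hd : Disjoint (X ∩ Y) (X' ∩ free n m X Y) := by
    rw [Finset.disjoint_left]
    intro v hv hv'
    simp only [Finset.mem_inter, mem_free] at hv hv'
    tauto
  conv_lhs => rw [← h'.cardX, e]
  rw [Finset.card_insert_of_notMem hm, Finset.card_union_of_disjoint hd]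
  ring

lemma Adm.injOn {n k a b a' b' : ℕ} {nu : ℕ → ℕ} {X Y : Finset ℕ} {m : ℕ} (hk : k ≤ 1)
    (h : Adm n k a b nu X Y) (hmX : m ∈ X) (hx : ∀ x ∈ X, m ≤ x) (hy : ∀ y ∈ Y, m < y) :
    Set.InjOn (fun p : Finset ℕ × Finset ℕ => p.1 ∩ free n m X Y)
      {p | Adm n k a' b' nu p.1 p.2} := by
  rintro ⟨X₁, Y₁⟩ h1 ⟨X₂, Y₂⟩ h2 heq
  have h1 : Adm n k a' b' nu X₁ Y₁ := h1
  have h2 : Adm n k a' b' nu X₂ Y₂ := h2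
  simp only at heq
  obtain rfl : X₁ = X₂ := by
    ext v
    rw [h.mem_iff hk h1 hmX hx hy v, h.mem_iff hk h2 hmX hx hy v, heq]
  obtain rfl : Y₁ = Y₂ := by
    ext v
    have := mem_of_ind_add (h1.ind_add hk h2 v)
    tauto
  rfl

/-- Any set `P` of free values of the right size gives an admissible pair for the transposed hook
with the same content. -/
lemma Adm.swap {n k c b : ℕ} {nu : ℕ → ℕ} {X Y P : Finset ℕ} {m : ℕ}
    (h : Adm n k (c + 1) b nu X Y) (hmX : m ∈ X)
    (hx : ∀ x ∈ X, m ≤ x) (hy : ∀ y ∈ Y, m < y) (hP : P ⊆ free n m X Y)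
    (hcard : #P = b - #(X ∩ Y)) :
    Adm n k (b + 1) c nu (insert m ((X ∩ Y) ∪ P)) ((X ∪ Y) \ insert m P) := by
  have hmY : m ∉ Y := fun hm => (hy m hm).false
  have hP' := fun v (hv : v ∈ P) => mem_free.1 (hP hv)
  have hmP : m ∉ P := fun hm => (hP' m hm).2.2 rfl
  have hI : #(X ∩ Y) ≤ b := by
    rw [← h.cardY]; exact Finset.card_le_card Finset.inter_subset_right
  have hsum : ∀ v, ind (insert m ((X ∩ Y) ∪ P)) v + ind ((X ∪ Y) \ insert m P) v =
      ind X v + ind Y v := by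
    intro v
    have h1 := hP' v
    unfold ind
    simp only [Finset.mem_insert, Finset.mem_union, Finset.mem_inter, Finset.mem_sdiff]
    by_cases hv : v = m
    · subst hv; simp [hmX, hmY]
    · by_cases h2 : v ∈ X <;> by_cases h3 : v ∈ Y <;> by_cases h4 : v ∈ P <;> simp_all
  have hmr := h.range m hmX
  have hdisj : Disjoint (X ∩ Y) P := by
    rw [Finset.disjoint_left]
    intro v hv hv'
    have := hP' v hv'
    rw [Finset.mem_inter] at hv
    tauto
  refine ⟨?_, ?_, ?_, ?_, ?_, ?_⟩
  · intro x hxm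
    simp only [Finset.mem_insert, Finset.mem_union, Finset.mem_inter] at hxm
    rcases hxm with rfl | hxm | hxm
    · exact hmr
    · exact h.range x hxm.1
    · have h1 := hP' x hxm
      rcases h1.1.1 with h2 | h2
      · exact h.range x h2
      · have := hy x h2
        omega
  · rw [Finset.card_insert_of_notMem (by simp [hmY, hmP]), Finset.card_union_of_disjoint hdisj,
      hcard]
    omega
  · have hsub : insert m P ⊆ X ∪ Y := by
      intro v hv
      rw [Finset.mem_insert] at hv
      rw [Finset.mem_union]
      rcases hv with rfl | hv
      · exact Or.inl hmX
      · exact (hP' v hv).1.1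
    have h1 := Finset.card_union_add_card_inter X Y
    rw [h.cardX, h.cardY] at h1
    rw [Finset.card_sdiff_of_subset hsub, Finset.card_insert_of_notMem hmP, hcard]
    omega
  · intro y hym
    refine ⟨m, Finset.mem_insert_self _ _, ?_⟩
    simp only [Finset.mem_sdiff, Finset.mem_union, Finset.mem_insert, not_or] at hym
    rcases hym.1 with h2 | h2
    · exact lt_of_le_of_ne (hx y h2) (Ne.symm hym.2.1)
    · exact hy y h2
  · intro y hym
    rw [add_assoc (n + 1 - (y - 1)), hsum, ← add_assoc]
    have h1 := hP' y
    simp only [Finset.mem_sdiff, Finset.mem_union, Finset.mem_insert, not_or] at hym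
    have hypos : m < y := by
      rcases hym.1 with h2 | h2
      · exact lt_of_le_of_ne (hx y h2) (Ne.symm hym.2.1)
      · exact hy y h2
    by_cases hyI : y ∈ X ∩ Y
    · rw [Finset.mem_inter] at hyI
      have h2 := h.lattice y hyI.2
      have h3 : ind X y = 1 := if_pos hyI.1
      have h4 : ind (insert m ((X ∩ Y) ∪ P)) y ≤ 1 := by
        unfold ind
        split_ifs <;> omega
      omega
    · have h3 : ind (insert m ((X ∩ Y) ∪ P)) y = 0 := by
        refine if_neg ?_
        simp only [Finset.mem_insert, Finset.mem_union]
        tauto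
      rcases Nat.lt_or_ge (n + 1) y with h4 | h4
      · rcases hym.1 with h5 | h5
        · have := (h.range y h5).2
          omega
        · have := h.lattice y h5
          omega
      · omega
  · intro v hv
    rw [add_assoc, hsum, ← add_assoc]
    exact h.content v hv

/-- With `t` repeated values and `e` free values, there are at most `e.choose (c - t)` admissible
pairs for the hook and at least `e.choose (b - t)` for its transpose; unimodality compares them,
because `e - (c - t) ≤ b - t ≤ c - t`. -/
lemma ncard_adm_le {n k c b : ℕ} (nu : ℕ → ℕ) (hk : k ≤ 1) (hbc : b ≤ c) :
    {p : Finset ℕ × Finset ℕ | Adm n k (c + 1) b nu p.1 p.2}.ncard ≤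
      {p : Finset ℕ × Finset ℕ | Adm n k (b + 1) c nu p.1 p.2}.ncard := by
  rcases Set.eq_empty_or_nonempty {p : Finset ℕ × Finset ℕ | Adm n k (c + 1) b nu p.1 p.2}
    with he | ⟨⟨X, Y⟩, h⟩
  · rw [he, Set.ncard_empty]
    exact Nat.zero_le _
  have h : Adm n k (c + 1) b nu X Y := h
  obtain ⟨m, hmX, hx, hy⟩ := h.exists_min (by omega)
  have hI : #(X ∩ Y) ≤ b := by
    rw [← h.cardY]; exact Finset.card_le_card Finset.inter_subset_right
  have hcX := h.card_eq hk h hmX hx hy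
  have hup : {p : Finset ℕ × Finset ℕ | Adm n k (c + 1) b nu p.1 p.2}.ncard ≤
      #(powersetCard (c - #(X ∩ Y)) (free n m X Y)) := by
    rw [← Set.ncard_coe_finset]
    refine Set.ncard_le_ncard_of_injOn (fun p => p.1 ∩ free n m X Y) ?_ (h.injOn hk hmX hx hy)
      (Finset.finite_toSet _)
    rintro ⟨X', Y'⟩ h'
    have h' : Adm n k (c + 1) b nu X' Y' := h'
    rw [Finset.mem_coe, Finset.mem_powersetCard]
    have := h.card_eq hk h' hmX hx hy
    exact ⟨Finset.inter_subset_right, by simp only; omega⟩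
  -- Finiteness is needed since `ncard` of an infinite set is `0`.
  have hfin : {p : Finset ℕ × Finset ℕ | Adm n k (b + 1) c nu p.1 p.2}.Finite := by
    refine Set.Finite.of_finite_image (f := fun p => p.1 ∩ free n m X Y) ?_ (h.injOn hk hmX hx hy)
    refine (Finset.finite_toSet (free n m X Y).powerset).subset ?_
    rintro _ ⟨p, -, rfl⟩
    rw [Finset.mem_coe, Finset.mem_powerset]
    exact Finset.inter_subset_right
  have hlow : #(powersetCard (b - #(X ∩ Y)) (free n m X Y)) ≤
      {p : Finset ℕ × Finset ℕ | Adm n k (b + 1) c nu p.1 p.2}.ncard := by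
    rw [← Set.ncard_coe_finset]
    refine Set.ncard_le_ncard_of_injOn
      (fun P => (insert m ((X ∩ Y) ∪ P), (X ∪ Y) \ insert m P)) ?_ ?_ hfin
    · intro P hP
      rw [Finset.mem_coe, Finset.mem_powersetCard] at hP
      exact h.swap hmX hx hy hP.1 hP.2
    · intro P hP Q hQ heq
      rw [Finset.mem_coe, Finset.mem_powersetCard] at hP hQ
      simp only [Prod.mk.injEq] at heq
      ext v
      have h1 := Finset.ext_iff.1 heq.1 v
      have h2 := fun hv : v ∈ P => mem_free.1 (hP.1 hv)
      have h3 := fun hv : v ∈ Q => mem_free.1 (hQ.1 hv)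
      simp only [Finset.mem_insert, Finset.mem_union, Finset.mem_inter] at h1
      tauto
  refine hup.trans (le_trans ?_ hlow)
  rw [Finset.card_powersetCard, Finset.card_powersetCard]
  have hp : #(X ∩ free n m X Y) ≤ #(free n m X Y) := Finset.card_le_card Finset.inter_subset_right
  have hq : #(free n m X Y \ X) ≤ #(Y \ (X ∩ Y)) := by
    refine Finset.card_le_card fun v hv => ?_
    simp only [Finset.mem_sdiff, mem_free, Finset.mem_inter] at hv ⊢
    tauto
  rw [Finset.card_sdiff_of_subset Finset.inter_subset_right, h.cardY, Finset.card_sdiff] at hq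
  rw [← Nat.choose_symm (show c - #(X ∩ Y) ≤ #(free n m X Y) by omega)]
  exact choose_unimodal (by omega) (by omega)

end HookSBF

/-- Let `n ≥ 1`, `0 ≤ k ≤ 1`, and let `λ = (λa, 1^{λl-1})`
be a hook with `λl ≤ λa ≤ k + n`.  Then `s_{𝒮(λᵗ,k,n)} - s_{𝒮(λ,k,n)}` is
Schur-positive: by the Littlewood-Richardson rule, for every content `ν` the
LR coefficient of `s_ν` in `s_{𝒮(λ,k,n)}` is at most the one in
`s_{𝒮(λᵗ,k,n)}` (here `λᵗ = (λl, 1^{λa-1})`). -/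
theorem hook_transpose_diff_schurPositive
    (n k la ll : ℕ) (hn : 1 ≤ n) (hk : k ≤ 1) (hll : 1 ≤ ll) (hlla : ll ≤ la)
    (hla : la ≤ k + n) :
    ∀ nu : ℕ → ℕ,
      LRcount (SBF (hookFun la ll) k n) nu ≤
      LRcount (SBF (hookFun ll la) k n) nu := by
  intro nu
  obtain ⟨b, rfl⟩ : ∃ b, ll = b + 1 := ⟨ll - 1, by omega⟩
  obtain ⟨c, rfl⟩ : ∃ c, la = c + 1 := ⟨la - 1, by omega⟩
  rw [HookSBF.LRcount_eq nu hn hk (by omega) (by omega),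
    HookSBF.LRcount_eq nu hn hk (by omega) (by omega)]
  exact HookSBF.ncard_adm_le nu hk (by omega)
end

section
/- Let n be a positive integer, let 0 ≤ k ≤ 1, and let λ = (λ_a, 1^{λ_l − 1}) be a hook partition with λ_l ≤ λ_a ≤ k+n. Then the skew Schur functions s_{S(λ^t,k,n)} and s_{S(λ,k,n)} become equal upon restricting to n+1 variables, i.e. after setting x_{n+2} = x_{n+3} = ⋯ = 0. -/
/-! ### Columns with varying bottoms -/

/-- The diagram whose column `j < N` occupies the rows `N - 1 - j ≤ i < b j`. -/
def colCells {N : ℕ} (b : Fin N → ℤ) : Set (ℕ × ℕ) :=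
  {p | ∃ h : p.2 < N, N ≤ p.1 + p.2 + 1 ∧ (p.1 : ℤ) < b ⟨p.2, h⟩}

/-- The bottoms `b` define a skew diagram: they weakly decrease and no column has negative
length. -/
def ValidBot {N : ℕ} (b : Fin N → ℤ) : Prop :=
  Antitone b ∧ ∀ j : Fin N, (N : ℤ) ≤ j + b j + 1

/-- The semistandard tableaux of shape `colCells b` with entries at most `v`; there are none if
`b` is not valid. -/
def tabs {N : ℕ} (b : Fin N → ℤ) (v : ℕ) : Set (ℕ × ℕ → ℕ) :=
  {T | ValidBot b ∧ IsSSYT (colCells b) T ∧ ∀ p, T p ≤ v}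

/-- The bottoms after the last cell of every column in `s` is removed. -/
def lower {N : ℕ} (b : Fin N → ℤ) (s : Finset (Fin N)) : Fin N → ℤ :=
  fun j => b j - if j ∈ s then 1 else 0

lemma mem_colCells {N : ℕ} {b : Fin N → ℤ} {p : ℕ × ℕ} :
    p ∈ colCells b ↔ ∃ h : p.2 < N, N ≤ p.1 + p.2 + 1 ∧ (p.1 : ℤ) < b ⟨p.2, h⟩ := Iff.rfl

lemma colCells_finite {N : ℕ} (b : Fin N → ℤ) : (colCells b).Finite := by
  obtain ⟨M, hM⟩ := (Set.finite_range b).bddAbove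
  refine ((Set.finite_Iio M.toNat).prod (Set.finite_Iio N)).subset ?_
  rintro ⟨i, j⟩ ⟨h, -, h2⟩
  have := hM ⟨⟨j, h⟩, rfl⟩
  simp only [Set.mem_prod, Set.mem_Iio]
  simp only at h h2 this
  omega

lemma tabs_finite {N : ℕ} (b : Fin N → ℤ) (v : ℕ) : (tabs b v).Finite := by
  have : Finite (colCells b) := colCells_finite b
  have hfin : (Set.pi Set.univ (fun _ : colCells b => Set.Iic v)).Finite :=
    Set.Finite.pi fun _ => Set.finite_Iic v
  refine Set.Finite.of_injOn (f := fun T (p : colCells b) => T p) ?_ ?_ hfin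
  · intro T hT p _
    exact hT.2.2 p
  · intro T hT T' hT' h
    funext p
    by_cases hp : p ∈ colCells b
    · exact congrFun h ⟨p, hp⟩
    · rw [hT.2.1.2.1 p hp, hT'.2.1.2.1 p hp]

/-- The columns of `T` in which the letter `u` occurs. -/
noncomputable def colsWith (N : ℕ) (T : ℕ × ℕ → ℕ) (u : ℕ) : Finset (Fin N) := by
  classical exact Finset.univ.filter fun j => ∃ i, T (i, j) = u

lemma mem_colsWith {N : ℕ} {T : ℕ × ℕ → ℕ} {u : ℕ} {j : Fin N} :
    j ∈ colsWith N T u ↔ ∃ i, T (i, j) = u := by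
  simp [colsWith]

lemma colCells_lower_subset {N : ℕ} (b : Fin N → ℤ) (s : Finset (Fin N)) :
    colCells (lower b s) ⊆ colCells b := by
  rintro ⟨i, j⟩ ⟨h, h1, h2⟩
  refine ⟨h, h1, ?_⟩
  simp only [lower] at h2 ⊢
  split_ifs at h2 <;> omega

/-- In a tableau with entries at most `v + 1`, the letter `v + 1` sits at the bottom of its
column. -/
lemma eq_bottom {N : ℕ} {b : Fin N → ℤ} {v : ℕ} {T : ℕ × ℕ → ℕ} (hT : T ∈ tabs b (v + 1))
    {i : ℕ} {j : Fin N} (h : T (i, j) = v + 1) : (i, (j : ℕ)) ∈ colCells b ∧ (i : ℤ) + 1 = b j := by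
  obtain ⟨hb, ⟨hpos, hz, hrow, hcol⟩, hle⟩ := hT
  have hmem : (i, (j : ℕ)) ∈ colCells b := by
    by_contra hn
    have := hz _ hn
    omega
  refine ⟨hmem, ?_⟩
  obtain ⟨h0, h1, h2⟩ := hmem
  simp only at h0 h1 h2
  by_contra hne
  have hmem' : (i + 1, (j : ℕ)) ∈ colCells b := by
    refine ⟨h0, by simp only; omega, ?_⟩
    simp only [Fin.eta] at h2 ⊢
    push_cast
    omega
  have := hcol i (i + 1) j (by omega) ⟨h0, h1, h2⟩ hmem'
  have := hle (i + 1, j)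
  omega

lemma mem_lower_iff {N : ℕ} {b : Fin N → ℤ} {v : ℕ} {T : ℕ × ℕ → ℕ} (hT : T ∈ tabs b (v + 1))
    (p : ℕ × ℕ) :
    p ∈ colCells (lower b (colsWith N T (v + 1))) ↔ p ∈ colCells b ∧ T p ≠ v + 1 := by
  obtain ⟨i, j⟩ := p
  constructor
  · intro hp
    refine ⟨colCells_lower_subset _ _ hp, fun h => ?_⟩
    obtain ⟨h0, h1, h2⟩ := hp
    simp only at h0 h1 h2
    have hj : (⟨j, h0⟩ : Fin N) ∈ colsWith N T (v + 1) := mem_colsWith.2 ⟨i, h⟩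
    have := (eq_bottom hT (j := ⟨j, h0⟩) h).2
    simp only [lower, hj, if_true] at h2
    omega
  · rintro ⟨⟨h0, h1, h2⟩, hne⟩
    refine ⟨h0, h1, ?_⟩
    simp only [lower] at h0 h1 h2 ⊢
    split_ifs with hj
    · obtain ⟨i', hi'⟩ := mem_colsWith.1 hj
      have := (eq_bottom hT hi').2
      have hii : i ≠ i' := by rintro rfl; exact hne hi'
      omega
    · omega

lemma valid_lower {N : ℕ} {b : Fin N → ℤ} {v : ℕ} {T : ℕ × ℕ → ℕ} (hT : T ∈ tabs b (v + 1)) :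
    ValidBot (lower b (colsWith N T (v + 1))) := by
  have hT' := hT
  obtain ⟨⟨hanti, hbd⟩, ⟨hpos, hz, hrow, hcol⟩, hle⟩ := hT'
  constructor
  · intro j1 j2 h12
    have hb := hanti h12
    simp only [lower]
    by_cases hj1 : j1 ∈ colsWith N T (v + 1)
    · by_cases hj2 : j2 ∈ colsWith N T (v + 1)
      · simp only [hj1, hj2, if_true]; omega
      · simp only [hj1, hj2, if_true, if_false]
        obtain ⟨i, hi⟩ := mem_colsWith.1 hj1
        obtain ⟨hm, hbot⟩ := eq_bottom hT hi
        by_contra hlt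
        have h12' : (j1 : ℕ) ≤ j2 := h12
        have hm2 : (i, (j2 : ℕ)) ∈ colCells b := by
          obtain ⟨h0, h1, h2⟩ := hm
          refine ⟨j2.2, ?_, ?_⟩
          · simp only at h1 ⊢; omega
          · simp only [Fin.eta]; omega
        have h1 := hrow i j1 j2 h12' hm hm2
        have h2 := hle (i, (j2 : ℕ))
        exact hj2 (mem_colsWith.2 ⟨i, by omega⟩)
    · simp only [hj1, if_false]
      split_ifs <;> omega
  · intro j
    have := hbd j
    simp only [lower]
    split_ifs with hj
    · obtain ⟨i, hi⟩ := mem_colsWith.1 hj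
      obtain ⟨⟨h0, h1, h2⟩, hbot⟩ := eq_bottom hT hi
      simp only at h1
      omega
    · omega

/-- Erasing the letter `u`. -/
def eraseLetter (u : ℕ) (T : ℕ × ℕ → ℕ) : ℕ × ℕ → ℕ := fun p => if T p = u then 0 else T p

open Classical in
/-- Filling the cells of `D` outside `D'` with the letter `u`. -/
noncomputable def fillLetter (D D' : Set (ℕ × ℕ)) (u : ℕ) (T : ℕ × ℕ → ℕ) : ℕ × ℕ → ℕ :=
  fun p => if p ∈ D ∧ p ∉ D' then u else T p

lemma eraseLetter_mem {N : ℕ} {b : Fin N → ℤ} {v : ℕ} {T : ℕ × ℕ → ℕ}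
    (hT : T ∈ tabs b (v + 1)) :
    eraseLetter (v + 1) T ∈ tabs (lower b (colsWith N T (v + 1))) v := by
  have hm := mem_lower_iff hT
  refine ⟨valid_lower hT, ⟨?_, ?_, ?_, ?_⟩, ?_⟩
  · intro p hp
    obtain ⟨h1, h2⟩ := (hm p).1 hp
    simpa [eraseLetter, h2] using hT.2.1.1 p h1
  · intro p hp
    by_cases h2 : T p = v + 1
    · simp [eraseLetter, h2]
    · simp only [eraseLetter, h2, if_false]
      exact hT.2.1.2.1 p fun h1 => hp ((hm p).2 ⟨h1, h2⟩)
  · intro i j1 j2 h hp hq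
    obtain ⟨h1, h2⟩ := (hm _).1 hp
    obtain ⟨h3, h4⟩ := (hm _).1 hq
    simpa [eraseLetter, h2, h4] using hT.2.1.2.2.1 i j1 j2 h h1 h3
  · intro i1 i2 j h hp hq
    obtain ⟨h1, h2⟩ := (hm _).1 hp
    obtain ⟨h3, h4⟩ := (hm _).1 hq
    simpa [eraseLetter, h2, h4] using hT.2.1.2.2.2 i1 i2 j h h1 h3
  · intro p
    have := hT.2.2 p
    simp only [eraseLetter]
    split_ifs <;> omega

lemma mem_diff_iff {N : ℕ} {b : Fin N → ℤ} {s : Finset (Fin N)} (hs : ValidBot (lower b s))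
    {i j : ℕ} : ((i, j) ∈ colCells b ∧ (i, j) ∉ colCells (lower b s)) ↔
      ∃ h : j < N, (⟨j, h⟩ : Fin N) ∈ s ∧ (i : ℤ) + 1 = b ⟨j, h⟩ := by
  constructor
  · rintro ⟨⟨h0, h1, h2⟩, hn⟩
    simp only at h0 h1 h2
    have h3 : ¬ (i : ℤ) < lower b s ⟨j, h0⟩ := fun h => hn ⟨h0, h1, h⟩
    simp only [lower] at h3
    split_ifs at h3 with hj
    · exact ⟨h0, hj, by omega⟩
    · omega
  · rintro ⟨h0, hj, hi⟩
    have h4 := hs.2 ⟨j, h0⟩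
    simp only [lower, hj, if_true] at h4
    refine ⟨⟨h0, by simp only; omega, by simp only; omega⟩, ?_⟩
    rintro ⟨_, _, h2⟩
    simp only [lower, hj, if_true] at h2
    omega

lemma fillLetter_mem {N : ℕ} {b : Fin N → ℤ} {s : Finset (Fin N)} {v : ℕ} {T : ℕ × ℕ → ℕ}
    (hb : ValidBot b) (hT : T ∈ tabs (lower b s) v) :
    fillLetter (colCells b) (colCells (lower b s)) (v + 1) T ∈ tabs b (v + 1) := by
  obtain ⟨hs, ⟨hpos, hz, hrow, hcol⟩, hle⟩ := hT
  have hle' : ∀ p, fillLetter (colCells b) (colCells (lower b s)) (v + 1) T p ≤ v + 1 := by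
    intro p
    have := hle p
    simp only [fillLetter]
    split_ifs <;> omega
  refine ⟨hb, ⟨?_, ?_, ?_, ?_⟩, hle'⟩
  · intro p hp
    by_cases hp' : p ∈ colCells (lower b s)
    · simpa [fillLetter, hp'] using hpos p hp'
    · simp [fillLetter, hp, hp']
  · intro p hp
    simpa [fillLetter, hp] using hz p fun h => hp (colCells_lower_subset _ _ h)
  · intro i j1 j2 h hp hq
    by_cases hq' : (i, j2) ∈ colCells (lower b s)
    · have hp' : (i, j1) ∈ colCells (lower b s) := by
        obtain ⟨h0, h1, h2⟩ := hp
        obtain ⟨h3, h4, h5⟩ := hq'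
        refine ⟨h0, h1, lt_of_lt_of_le h5 (hs.1 ?_)⟩
        exact h
      simpa [fillLetter, hp', hq'] using hrow i j1 j2 h hp' hq'
    · refine (hle' _).trans ?_
      simp [fillLetter, hq, hq']
  · intro i1 i2 j h hp hq
    have hp' : (i1, j) ∈ colCells (lower b s) := by
      by_contra hn
      obtain ⟨h0, -, h2⟩ := (mem_diff_iff hs).1 ⟨hp, hn⟩
      obtain ⟨_, _, h5⟩ := hq
      simp only at h5
      omega
    by_cases hq' : (i2, j) ∈ colCells (lower b s)
    · simpa [fillLetter, hp', hq'] using hcol i1 i2 j h hp' hq'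
    · have := hle (i1, j)
      simp only [fillLetter, hp', hq, hq', not_true_eq_false, not_false_eq_true, and_false,
        and_self, if_true, if_false]
      omega

lemma colsWith_fillLetter {N : ℕ} {b : Fin N → ℤ} {s : Finset (Fin N)} {v : ℕ} {T : ℕ × ℕ → ℕ}
    (hT : T ∈ tabs (lower b s) v) :
    colsWith N (fillLetter (colCells b) (colCells (lower b s)) (v + 1) T) (v + 1) = s := by
  obtain ⟨hs, -, hle⟩ := hT
  ext j
  rw [mem_colsWith]
  constructor
  · rintro ⟨i, hi⟩
    have hd : (i, (j : ℕ)) ∈ colCells b ∧ (i, (j : ℕ)) ∉ colCells (lower b s) := by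
      by_contra hn
      have := hle (i, (j : ℕ))
      simp only [fillLetter, hn, if_false] at hi
      omega
    obtain ⟨_, h, _⟩ := (mem_diff_iff hs).1 hd
    exact h
  · intro hj
    have h4 := hs.2 j
    simp only [lower, hj, if_true] at h4
    have hpos : 0 ≤ b j - 1 := by have := j.2; omega
    refine ⟨(b j - 1).toNat, ?_⟩
    have := (mem_diff_iff (i := (b j - 1).toNat) (j := (j : ℕ)) hs).2
      ⟨j.2, hj, by simp only [Fin.eta]; omega⟩
    simp only [fillLetter, this, not_false_eq_true, and_self, if_true]

/-! ### The generating polynomial of tableaux -/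

section GeneratingFunction

variable {R : Type*} [CommRing R]

/-- The weight `∏ x_{T(p)}` of a filling of `colCells b`. -/
noncomputable def wt {N : ℕ} (x : ℕ → R) (b : Fin N → ℤ) (T : ℕ × ℕ → ℕ) : R :=
  ∏ p ∈ (colCells_finite b).toFinset, x (T p)

/-- The skew Schur polynomial of `colCells b` in the variables `x 1, …, x v`. -/
noncomputable def schur {N : ℕ} (x : ℕ → R) (v : ℕ) (b : Fin N → ℤ) : R :=
  ∑ T ∈ (tabs_finite b v).toFinset, wt x b T

lemma wt_split {N : ℕ} (x : ℕ → R) {b : Fin N → ℤ} {v : ℕ} {T : ℕ × ℕ → ℕ}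
    (hT : T ∈ tabs b (v + 1)) :
    wt x b T = x (v + 1) ^ (colsWith N T (v + 1)).card *
      wt x (lower b (colsWith N T (v + 1))) (eraseLetter (v + 1) T) := by
  classical
  set s := colsWith N T (v + 1) with hsdef
  have hm := mem_lower_iff hT
  have hs : ValidBot (lower b s) := valid_lower hT
  have hsub : (colCells_finite (lower b s)).toFinset ⊆ (colCells_finite b).toFinset := by
    simpa using colCells_lower_subset b s
  rw [wt, ← Finset.prod_sdiff hsub, wt]
  congr 1
  · have h1 : ∀ p ∈ (colCells_finite b).toFinset \ (colCells_finite (lower b s)).toFinset,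
        x (T p) = x (v + 1) := by
      intro p hp
      simp only [Finset.mem_sdiff, Set.Finite.mem_toFinset] at hp
      have : T p = v + 1 := by
        by_contra hne
        exact hp.2 ((hm p).2 ⟨hp.1, hne⟩)
      rw [this]
    rw [Finset.prod_congr rfl h1, Finset.prod_const]
    congr 1
    have hbpos : ∀ j ∈ s, 0 ≤ b j - 1 := by
      intro j hj
      have h4 := hs.2 j
      simp only [lower, hj, if_true] at h4
      have := j.2
      omega
    symm
    refine Finset.card_bij (fun j _ => ((b j - 1).toNat, (j : ℕ))) ?_ ?_ ?_
    · intro j hj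
      simp only [Finset.mem_sdiff, Set.Finite.mem_toFinset]
      refine (mem_diff_iff hs).2 ⟨j.2, hj, ?_⟩
      have := hbpos j hj
      simp only [Fin.eta]
      omega
    · intro j _ j' _ h
      exact Fin.ext (Prod.ext_iff.1 h).2
    · rintro ⟨i, j⟩ hp
      simp only [Finset.mem_sdiff, Set.Finite.mem_toFinset] at hp
      obtain ⟨h0, hj, hi⟩ := (mem_diff_iff hs).1 hp
      refine ⟨⟨j, h0⟩, hj, ?_⟩
      simp only [Prod.mk.injEq, and_true]
      omega
  · refine Finset.prod_congr rfl fun p hp => ?_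
    simp only [Set.Finite.mem_toFinset] at hp
    simp [eraseLetter, ((hm p).1 hp).2]

/-- Removing the largest letter. -/
lemma schur_succ {N : ℕ} (x : ℕ → R) (v : ℕ) {b : Fin N → ℤ} (hb : ValidBot b) :
    schur x (v + 1) b = ∑ s : Finset (Fin N), x (v + 1) ^ s.card * schur x v (lower b s) := by
  classical
  rw [schur, ← Finset.sum_fiberwise (tabs_finite b (v + 1)).toFinset
    (fun T => colsWith N T (v + 1))]
  refine Finset.sum_congr rfl fun s _ => ?_
  rw [schur, Finset.mul_sum]
  refine Finset.sum_bij' (fun T _ => eraseLetter (v + 1) T)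
    (fun T _ => fillLetter (colCells b) (colCells (lower b s)) (v + 1) T) ?_ ?_ ?_ ?_ ?_
  · intro T hT
    simp only [Finset.mem_filter, Set.Finite.mem_toFinset] at hT ⊢
    obtain ⟨hT, rfl⟩ := hT
    exact eraseLetter_mem hT
  · intro T hT
    simp only [Finset.mem_filter, Set.Finite.mem_toFinset] at hT ⊢
    exact ⟨fillLetter_mem hb hT, colsWith_fillLetter hT⟩
  · intro T hT
    simp only [Finset.mem_filter, Set.Finite.mem_toFinset] at hT
    obtain ⟨hT, rfl⟩ := hT
    funext p
    have hm := mem_lower_iff hT p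
    by_cases hp : p ∈ colCells b
    · by_cases hv : T p = v + 1
      · simp [fillLetter, hm, hp, hv]
      · simp [fillLetter, eraseLetter, hm, hv]
    · simp [fillLetter, eraseLetter, hp, hT.2.1.2.1 p hp]
  · intro T hT
    simp only [Set.Finite.mem_toFinset] at hT
    funext p
    have hle := hT.2.2 p
    by_cases hp : p ∈ colCells b ∧ p ∉ colCells (lower b s)
    · simp [fillLetter, eraseLetter, hp, hT.2.1.2.1 p hp.2]
    · have : T p ≠ v + 1 := by omega
      simp only [fillLetter, eraseLetter, hp, if_false, this]
  · intro T hT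
    simp only [Finset.mem_filter, Set.Finite.mem_toFinset] at hT
    obtain ⟨hT, rfl⟩ := hT
    exact wt_split x hT

/-! ### The determinantal formula -/

/-- The elementary symmetric polynomial `e_m(x 1, …, x v)`, with `e_m = 0` for `m < 0`. -/
def elem (x : ℕ → R) : ℕ → ℤ → R
  | 0, m => if m = 0 then 1 else 0
  | v + 1, m => elem x v m + x (v + 1) * elem x v (m - 1)

lemma elem_of_neg (x : ℕ → R) (v : ℕ) : ∀ m : ℤ, m < 0 → elem x v m = 0 := by
  induction v with
  | zero => intro m hm; simp [elem, hm.ne]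
  | succ v ih => intro m hm; simp [elem, ih m hm, ih (m - 1) (by omega)]

lemma elem_of_gt (x : ℕ → R) (v : ℕ) : ∀ m : ℤ, (v : ℤ) < m → elem x v m = 0 := by
  induction v with
  | zero => intro m hm; simp only [Nat.cast_zero] at hm; simp [elem, hm.ne']
  | succ v ih =>
    intro m hm
    push_cast at hm
    simp [elem, ih m (by omega), ih (m - 1) (by omega)]

/-- The matrix `e_{P_j + 2i}`, where `P_j = b_j - j - (N - 1)` is the length of column `j`
lowered by `2j`. -/
def elemMat {N : ℕ} (x : ℕ → R) (v : ℕ) (b : Fin N → ℤ) : Matrix (Fin N) (Fin N) R :=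
  Matrix.of fun j i => elem x v (b j - j - (N - 1) + 2 * i)

lemma det_elemMat_succ {N : ℕ} (x : ℕ → R) (v : ℕ) (b : Fin N → ℤ) :
    (elemMat x (v + 1) b).det =
      ∑ s : Finset (Fin N), x (v + 1) ^ s.card * (elemMat x v (lower b s)).det := by
  classical
  have h1 : elemMat x (v + 1) b = (fun j => x (v + 1) • elemMat x v (fun j => b j - 1) j) +
      (fun j => elemMat x v b j) := by
    ext j i
    simp only [elemMat, Matrix.of_apply, elem, Pi.add_apply, Pi.smul_apply, smul_eq_mul]
    rw [add_comm]
    congr 3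
    ring
  rw [Matrix.det, h1, AlternatingMap.map_add_univ]
  refine Finset.sum_congr rfl fun s _ => ?_
  have h2 : s.piecewise (fun j => x (v + 1) • elemMat x v (fun j => b j - 1) j)
      (fun j => elemMat x v b j) =
      s.piecewise (fun j => x (v + 1) • elemMat x v (lower b s) j) (elemMat x v (lower b s)) := by
    funext j
    by_cases hj : j ∈ s
    · simp only [Finset.piecewise, hj, if_true]
      congr 1
      funext i
      simp [elemMat, lower, hj]
    · simp only [Finset.piecewise, hj, if_false]
      funext i
      simp [elemMat, lower, hj]
  rw [h2]
  have h3 := MultilinearMap.map_piecewise_smul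
    (Matrix.detRowAlternating (n := Fin N) (R := R)).toMultilinearMap (fun _ => x (v + 1))
    (elemMat x v (lower b s)) s
  rw [Finset.prod_const, smul_eq_mul] at h3
  exact h3

/-- If removing the cells in `s` spoils the monotonicity of the bottoms, two adjacent rows of the
matrix coincide. -/
lemma det_elemMat_lower_of_not_antitone {N : ℕ} (x : ℕ → R) (v : ℕ) {b : Fin N → ℤ}
    (hb : Antitone b) (s : Finset (Fin N)) (hs : ¬ Antitone (lower b s)) :
    (elemMat x v (lower b s)).det = 0 := by
  rcases N with _ | m
  · exact absurd (fun i => i.elim0) hs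
  rw [Fin.antitone_iff_succ_le] at hs
  push Not at hs
  obtain ⟨j, hj⟩ := hs
  have hbj := hb (Fin.castSucc_le_succ j)
  refine Matrix.det_zero_of_row_eq (i := j.castSucc) (j := j.succ) (Fin.castSucc_lt_succ).ne ?_
  funext i
  simp only [elemMat, Matrix.of_apply]
  congr 2
  simp only [lower] at hj ⊢
  simp only [Fin.val_castSucc, Fin.val_succ]
  push_cast
  split_ifs at hj ⊢ <;> omega

/-- Without letters only the empty shape has a tableau; on the determinant side, a nonzero term
needs a permutation that is increasing, hence the identity. -/
lemma schur_zero {N : ℕ} (x : ℕ → R) (b : Fin N → ℤ) (hb : Antitone b) :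
    schur x 0 b = (elemMat x 0 b).det := by
  classical
  by_cases hz : ∀ j : Fin N, b j = N - 1 - j
  · have hcell : colCells b = ∅ := by
      ext ⟨i, j⟩
      simp only [Set.mem_empty_iff_false, iff_false]
      rintro ⟨h0, h1, h2⟩
      rw [hz] at h2
      simp only at h0 h1 h2
      omega
    have hM : elemMat x 0 b = 1 := by
      ext j i
      simp only [elemMat, elem, Matrix.of_apply, Matrix.one_apply, hz]
      refine if_congr ?_ rfl rfl
      rw [Fin.ext_iff]
      omega
    have hT : (tabs_finite b 0).toFinset = {fun _ => 0} := by
      ext T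
      simp only [Set.Finite.mem_toFinset, Finset.mem_singleton]
      constructor
      · intro hT
        funext p
        exact Nat.le_zero.1 (hT.2.2 p)
      · rintro rfl
        refine ⟨⟨hb, fun j => ?_⟩, ⟨?_, ?_, ?_, ?_⟩, ?_⟩
        · rw [hz]; omega
        all_goals simp [hcell]
    rw [hM, Matrix.det_one, schur, hT, Finset.sum_singleton, wt]
    simp [hcell]
  · have h1 : (tabs_finite b 0).toFinset = ∅ := by
      rw [Finset.eq_empty_iff_forall_notMem]
      intro T hT
      rw [Set.Finite.mem_toFinset] at hT
      push Not at hz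
      obtain ⟨j, hj⟩ := hz
      have hbd := hT.1.2 j
      have hj2 := j.2
      have hmem : (N - 1 - (j : ℕ), (j : ℕ)) ∈ colCells b := by
        refine ⟨j.2, by simp only; omega, ?_⟩
        simp only [Fin.eta]
        omega
      have := hT.2.1.1 _ hmem
      have := hT.2.2 (N - 1 - (j : ℕ), (j : ℕ))
      omega
    rw [schur, h1, Finset.sum_empty]
    symm
    rw [Matrix.det_apply]
    refine Finset.sum_eq_zero fun σ _ => ?_
    by_contra hne
    apply hz
    have hσ : ∀ i, b (σ i) - (σ i : ℕ) - (N - 1) + 2 * (i : ℕ) = 0 := by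
      intro i
      by_contra h0
      apply hne
      rw [Finset.prod_eq_zero (Finset.mem_univ i), smul_zero]
      simp [elemMat, elem, h0]
    -- `σ` is increasing because the `P_j` decrease strictly
    have hmono : StrictMono σ := by
      intro i i' hii
      by_contra hle
      have h1 : σ i' ≤ σ i := not_lt.1 hle
      have h2 := hb h1
      have h3 := hσ i
      have h4 := hσ i'
      have h5 : (i : ℕ) < i' := hii
      have h6 : (σ i' : ℕ) ≤ σ i := h1
      omega
    have hid : ∀ i, σ i = i := by
      intro i
      have : (hmono.orderIsoOfSurjective σ σ.surjective) = OrderIso.refl _ := Subsingleton.elim _ _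
      exact congrArg (fun f : Fin N ≃o Fin N => f i) this
    intro j
    have := hσ j
    rw [hid] at this
    omega

/-- The dual Jacobi–Trudi formula for the shapes `colCells b`. -/
lemma schur_eq_det {N : ℕ} (x : ℕ → R) (v : ℕ) :
    ∀ b : Fin N → ℤ, Antitone b → schur x v b = (elemMat x v b).det := by
  induction v with
  | zero => exact schur_zero x
  | succ v ih =>
    intro b hb
    have key : schur x (v + 1) b =
        ∑ s : Finset (Fin N), x (v + 1) ^ s.card * schur x v (lower b s) := by
      by_cases hv : ValidBot b
      · exact schur_succ x v hv
      · have hempty : ∀ (u : ℕ) (b' : Fin N → ℤ), ¬ ValidBot b' → schur x u b' = 0 := by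
          intro u b' h
          refine Finset.sum_eq_zero fun T hT => ?_
          rw [Set.Finite.mem_toFinset] at hT
          exact absurd hT.1 h
        rw [hempty _ _ hv]
        symm
        refine Finset.sum_eq_zero fun s _ => ?_
        rw [hempty, mul_zero]
        intro h
        refine hv ⟨hb, fun j => ?_⟩
        have := h.2 j
        simp only [lower] at this
        split_ifs at this <;> omega
    rw [key, det_elemMat_succ]
    refine Finset.sum_congr rfl fun s _ => ?_
    congr 1
    by_cases hs : Antitone (lower b s)
    · exact ih _ hs
    · rw [det_elemMat_lower_of_not_antitone x v hb s hs]
      refine Finset.sum_eq_zero fun T hT => ?_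
      rw [Set.Finite.mem_toFinset] at hT
      exact absurd hT.1.1 hs

/-! ### The quadratic relations and the symmetry of hook minors -/

/-- The relation `∑_y (-1)^y e_y e_{K-y} = 0` for odd `K = 2c + 1 + 2j + 2j'`, which holds because
`y ↦ K - y` reverses the sign. With `y = c - i + 2j`, all nonzero terms have `-N ≤ i < N` as there
are only `N + c` variables; the terms with `i ≥ 0` form the left side, and those with `i < 0`,
negated and reindexed by `i ↦ -1 - i`, the right side. -/
lemma elem_relation (x : ℕ → R) (N c : ℕ) (j j' : Fin N) :
    ∑ i ∈ Finset.range N, (-1 : R) ^ i *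
        (elem x (N + c) (c - i + 2 * j) * elem x (N + c) (c + 1 + i + 2 * j')) =
    ∑ i ∈ Finset.range N, (-1 : R) ^ i *
        (elem x (N + c) (c + 1 + i + 2 * j) * elem x (N + c) (c - i + 2 * j')) := by
  classical
  set F : ℕ → R := fun m => (-1 : R) ^ (m + N) *
    (elem x (N + c) (c - (m - N) + 2 * j) * elem x (N + c) (c + 1 + (m - N) + 2 * j')) with hF
  have hj := j.2
  have hj' := j'.2
  have hsum : ∑ m ∈ Finset.range (N + N), F m = 0 := by
    rw [← Finset.sum_filter_ne_zero]
    have hsupp : ∀ m, F m ≠ 0 → (0 ≤ (c : ℤ) - (m - N) + 2 * j ∧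
        (c : ℤ) - (m - N) + 2 * j ≤ N + c) ∧ 0 ≤ (c : ℤ) + 1 + (m - N) + 2 * j' ∧
        (c : ℤ) + 1 + (m - N) + 2 * j' ≤ N + c := by
      intro m hm
      refine ⟨⟨?_, ?_⟩, ?_, ?_⟩ <;> by_contra h <;> apply hm <;> simp only [hF]
      · rw [elem_of_neg x _ (c - (m - N) + 2 * j) (by omega)]; ring
      · rw [elem_of_gt x _ (c - (m - N) + 2 * j) (by push_cast; omega)]; ring
      · rw [elem_of_neg x _ (c + 1 + (m - N) + 2 * j') (by omega)]; ring
      · rw [elem_of_gt x _ (c + 1 + (m - N) + 2 * j') (by push_cast; omega)]; ring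
    have hflip : ∀ m, F m ≠ 0 → F (2 * N + 2 * j - 1 - m - 2 * j') = - F m := by
      intro m hm
      have hs := hsupp m hm
      have hcast : ((2 * N + 2 * j - 1 - m - 2 * j' : ℕ) : ℤ) =
          2 * N + 2 * j - 1 - m - 2 * j' := by omega
      have hsign : (-1 : R) ^ (2 * N + 2 * j - 1 - m - 2 * j' + N) = - (-1 : R) ^ (m + N) := by
        rcases Nat.even_or_odd (m + N) with h | h
        · rw [h.neg_one_pow, Odd.neg_one_pow]
          rw [Nat.even_iff] at h; rw [Nat.odd_iff]; omega
        · rw [h.neg_one_pow, Even.neg_one_pow, neg_neg]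
          rw [Nat.odd_iff] at h; rw [Nat.even_iff]; omega
      simp only [hF]
      rw [hsign, hcast,
        show (c : ℤ) - (2 * N + 2 * j - 1 - m - 2 * j' - N) + 2 * j =
          c + 1 + (m - N) + 2 * j' by ring,
        show (c : ℤ) + 1 + (2 * N + 2 * j - 1 - m - 2 * j' - N) + 2 * j' =
          c - (m - N) + 2 * j by ring]
      ring
    refine Finset.sum_involution (fun m _ => 2 * N + 2 * j - 1 - m - 2 * j') ?_ ?_ ?_ ?_
    · intro m hm
      rw [Finset.mem_filter] at hm
      rw [hflip m hm.2, add_neg_cancel]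
    · intro m hm _
      rw [Finset.mem_filter] at hm
      have := hsupp m hm.2
      omega
    · intro m hm
      rw [Finset.mem_filter] at hm ⊢
      have := hsupp m hm.2
      refine ⟨?_, ?_⟩
      · rw [Finset.mem_range]; omega
      · rw [hflip m hm.2]; exact neg_ne_zero.2 hm.2
    · intro m hm
      rw [Finset.mem_filter] at hm
      have := hsupp m hm.2
      omega
  rw [Finset.sum_range_add, ← Finset.sum_range_reflect] at hsum
  have hA : ∑ m ∈ Finset.range N, F (N + m) = ∑ i ∈ Finset.range N, (-1 : R) ^ i *
        (elem x (N + c) (c - i + 2 * j) * elem x (N + c) (c + 1 + i + 2 * j')) := by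
    refine Finset.sum_congr rfl fun m _ => ?_
    simp only [hF]
    push_cast
    rw [show N + m + N = m + 2 * N by ring, pow_add, pow_mul, neg_one_sq, one_pow, mul_one,
      add_sub_cancel_left]
  have hB : ∑ m ∈ Finset.range N, F (N - 1 - m) = - ∑ i ∈ Finset.range N, (-1 : R) ^ i *
        (elem x (N + c) (c + 1 + i + 2 * j) * elem x (N + c) (c - i + 2 * j')) := by
    rw [← Finset.sum_neg_distrib]
    refine Finset.sum_congr rfl fun m hm => ?_
    rw [Finset.mem_range] at hm
    have hcast : ((N - 1 - m : ℕ) : ℤ) = N - 1 - m := by omega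
    have hsign : (-1 : R) ^ (N - 1 - m + N) = - (-1 : R) ^ m := by
      rcases Nat.even_or_odd m with h | h
      · rw [h.neg_one_pow, Odd.neg_one_pow]
        rw [Nat.even_iff] at h; rw [Nat.odd_iff]; omega
      · rw [h.neg_one_pow, Even.neg_one_pow, neg_neg]
        rw [Nat.odd_iff] at h; rw [Nat.even_iff]; omega
    simp only [hF]
    rw [hsign, hcast, show (c : ℤ) - (N - 1 - m - N) + 2 * j = c + 1 + m + 2 * j by ring,
      show (c : ℤ) + 1 + (N - 1 - m - N) + 2 * j' = c - m + 2 * j' by ring]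
    ring
  rw [hA, hB] at hsum
  linear_combination hsum

/-- The bottoms of the columns of `𝒮(λ, k, n)` with `N = n + k` columns, for the hook
`λ = (r + 1, 1^q)`. -/
def hookBot (N n r q : ℕ) : Fin N → ℤ :=
  fun j => if (j : ℕ) = 0 then n + q + 1 else if (j : ℕ) ≤ r then n + 1 else n

/-- The matrix `e_{c + 1 + q + 2j}`; its row `q` is the row of `elemMat` for the first column of
the shape with foundation `(r + 1, 1^q)`. -/
def armMat (x : ℕ → R) (N c : ℕ) : Matrix (Fin N) (Fin N) R :=
  Matrix.of fun q j => elem x (N + c) (c + 1 + q + 2 * j)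

/-- A hook determinant is, up to sign, an entry of `armMat * adj P`, with `P` the matrix of the
shape whose columns all end at row `n`. -/
lemma armMat_mul_adjugate (x : ℕ → R) {N n c : ℕ} (hn : N + c = n + 1) (q r : Fin N) :
    (armMat x N c * (elemMat x (n + 1) (fun _ : Fin N => (n : ℤ))).adjugate) q r =
      (-1) ^ (r : ℕ) * (elemMat x (n + 1) (hookBot N n r q)).det := by
  set P := elemMat x (n + 1) (fun _ : Fin N => (n : ℤ)) with hP
  have h1 : (armMat x N c * P.adjugate) q r = (P.updateRow r (armMat x N c q)).det := by
    rw [← Matrix.cramer_transpose_apply, Matrix.cramer_eq_adjugate_mulVec,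
      ← Matrix.adjugate_transpose, Matrix.mulVec_transpose]
    rfl
  have hsub : P.updateRow r (armMat x N c q) =
      (elemMat x (n + 1) (hookBot N n r q)).submatrix r.cycleRange id := by
    have hN : NeZero N := ⟨by have := r.2; omega⟩
    ext j i
    rw [Matrix.submatrix_apply, id]
    rcases lt_trichotomy j r with h | h | h
    · rw [Matrix.updateRow_ne h.ne, Fin.cycleRange_of_lt h]
      have hlt : (j : ℕ) < r := h
      have hv : ((j + 1 : Fin N) : ℕ) = j + 1 := Fin.val_add_one_of_lt' (by have := r.2; omega)
      simp only [hP, elemMat, Matrix.of_apply, hookBot, hv]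
      rw [if_neg (by omega), if_pos (by omega)]
      congr 2
      push_cast
      ring
    · subst h
      rw [Matrix.updateRow_self, Fin.cycleRange_self]
      simp only [armMat, elemMat, Matrix.of_apply, hookBot, Fin.val_zero, if_true]
      rw [hn]
      congr 2
      push_cast
      omega
    · rw [Matrix.updateRow_ne h.ne', Fin.cycleRange_of_gt h]
      have hlt : (r : ℕ) < j := h
      simp only [hP, elemMat, Matrix.of_apply, hookBot]
      rw [if_neg (by omega), if_neg (by omega)]
  rw [h1, hsub, Matrix.det_permute, Fin.sign_cycleRange]
  simp

/-- Transposing the hook does not change the determinant. The quadratic relations say that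
`Pᵀ D Q = Qᵀ D P`, hence `D (Q adj P) = (Q adj P)ᵀ D` once `det P` is cancelled. -/
lemma det_hookBot_comm [IsDomain R] (x : ℕ → R) {N n c : ℕ} (hn : N + c = n + 1) (q r : Fin N)
    (hdet : (elemMat x (n + 1) (fun _ : Fin N => (n : ℤ))).det ≠ 0) :
    (elemMat x (n + 1) (hookBot N n r q)).det = (elemMat x (n + 1) (hookBot N n q r)).det := by
  have hqr := armMat_mul_adjugate x hn q r
  have hrq := armMat_mul_adjugate x hn r q
  set P := elemMat x (n + 1) (fun _ : Fin N => (n : ℤ)) with hP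
  set Q := armMat x N c with hQ
  set D : Matrix (Fin N) (Fin N) R := Matrix.diagonal fun i => (-1) ^ (i : ℕ) with hD
  have hrel : P.transpose * D * Q = Q.transpose * D * P := by
    ext j j'
    have h := elem_relation x N c j j'
    rw [Finset.sum_range, Finset.sum_range] at h
    rw [Matrix.mul_apply, Matrix.mul_apply]
    simp only [hD, Matrix.mul_diagonal, Matrix.transpose_apply]
    convert h using 2 with i _ i _
    · simp only [hP, hQ, elemMat, armMat, Matrix.of_apply, hn]
      rw [show (n : ℤ) - i - (N - 1) + 2 * j = c - i + 2 * j by omega]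
      ring
    · simp only [hP, hQ, elemMat, armMat, Matrix.of_apply, hn]
      rw [show (n : ℤ) - i - (N - 1) + 2 * j' = c - i + 2 * j' by omega]
      ring
  have hK : P.det • (D * (Q * P.adjugate)) = P.det • ((Q * P.adjugate).transpose * D) := by
    have h1 : P.transpose.adjugate * P.transpose = P.det • (1 : Matrix (Fin N) (Fin N) R) := by
      rw [Matrix.adjugate_mul, Matrix.det_transpose]
    have h2 : P * P.adjugate = P.det • (1 : Matrix (Fin N) (Fin N) R) := Matrix.mul_adjugate P
    calc P.det • (D * (Q * P.adjugate))
        = (P.transpose.adjugate * P.transpose) * (D * (Q * P.adjugate)) := by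
          rw [h1, Matrix.smul_mul, Matrix.one_mul]
      _ = P.transpose.adjugate * (P.transpose * D * Q) * P.adjugate := by
          simp only [Matrix.mul_assoc]
      _ = (P.transpose.adjugate * Q.transpose * D) * (P * P.adjugate) := by
          rw [hrel]; simp only [Matrix.mul_assoc]
      _ = P.det • ((Q * P.adjugate).transpose * D) := by
          rw [h2, Matrix.mul_smul, Matrix.mul_one, Matrix.transpose_mul, Matrix.adjugate_transpose]
  have hent := congrFun (congrFun hK q) r
  simp only [Matrix.smul_apply, smul_eq_mul, hD, Matrix.diagonal_mul, Matrix.mul_diagonal,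
    Matrix.transpose_apply] at hent
  have h := mul_left_cancel₀ hdet hent
  rw [hqr, hrq] at h
  have hq2 : ((-1 : R) ^ (q : ℕ)) * (-1) ^ (q : ℕ) = 1 := by rw [← mul_pow]; simp
  have hr2 : ((-1 : R) ^ (r : ℕ)) * (-1) ^ (r : ℕ) = 1 := by rw [← mul_pow]; simp
  have hu : ((-1 : R) ^ (q : ℕ) * (-1) ^ (r : ℕ)) * ((-1) ^ (q : ℕ) * (-1) ^ (r : ℕ)) = 1 := by
    linear_combination (-1 : R) ^ (r : ℕ) * (-1) ^ (r : ℕ) * hq2 + hr2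
  linear_combination ((-1 : R) ^ (q : ℕ) * (-1) ^ (r : ℕ)) * h -
    ((elemMat x (n + 1) (hookBot N n r q)).det - (elemMat x (n + 1) (hookBot N n q r)).det) * hu

end GeneratingFunction

/-! ### From tableaux counts to polynomials -/

lemma hookBot_antitone (N n r q : ℕ) : Antitone (hookBot N n r q) := by
  intro j j' h
  have h' : (j : ℕ) ≤ j' := h
  simp only [hookBot]
  split_ifs <;> omega

lemma hookBot_valid {N n k : ℕ} (hk : k ≤ 1) (hN : N = n + k) (r q : ℕ) :
    ValidBot (hookBot N n r q) := by
  refine ⟨hookBot_antitone N n r q, fun j => ?_⟩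
  simp only [hookBot]
  split_ifs <;> omega

lemma SBF_eq_colCells {n k a l : ℕ} (hk : k ≤ 1) (ha : 1 ≤ a) (hl : 1 ≤ l) (han : a ≤ k + n) :
    SBF (hookFun a l) k n = colCells (hookBot (n + k) n (a - 1) (l - 1)) := by
  ext ⟨i, j⟩
  have hcol : (i, j) ∈ colCells (hookBot (n + k) n (a - 1) (l - 1)) ↔
      j < n + k ∧ n + k ≤ i + j + 1 ∧ (i : ℤ) < if j = 0 then (n : ℤ) + (l - 1 : ℕ) + 1 else
        if j ≤ a - 1 then (n : ℤ) + 1 else n :=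
    ⟨fun ⟨h0, h1, h2⟩ => ⟨h0, h1, h2⟩, fun ⟨h0, h1, h2⟩ => ⟨h0, h1, h2⟩⟩
  rw [hcol]
  simp only [SBF, staircaseCells, foundationCells, hookFun, Set.mem_union, Set.mem_ofPred_eq]
  split_ifs <;> omega

/-- The shape whose columns all end at row `n` has a tableau with entries at most `n + 1`,
numbering each column from the top, so its Schur polynomial is nonzero. -/
lemma schur_const_ne_zero {N n c : ℕ} (hn : N + c = n + 1) :
    schur (MvPolynomial.X : ℕ → MvPolynomial ℕ ℤ) (n + 1) (fun _ : Fin N => (n : ℤ)) ≠ 0 := by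
  classical
  intro h0
  have h1 := congrArg (MvPolynomial.eval (fun _ => (1 : ℤ))) h0
  simp only [schur, wt, map_sum, map_prod, MvPolynomial.eval_X, Finset.prod_const_one,
    Finset.sum_const, map_zero, nsmul_eq_mul, mul_one, Nat.cast_eq_zero,
    Finset.card_eq_zero] at h1
  have hmem : (fun p : ℕ × ℕ => if p ∈ colCells (fun _ : Fin N => (n : ℤ)) then
      p.1 + p.2 + 2 - N else 0) ∈ tabs (fun _ : Fin N => (n : ℤ)) (n + 1) := by
    refine ⟨⟨fun _ _ _ => le_rfl, fun j => by change (N : ℤ) ≤ j + n + 1; omega⟩, ⟨?_, ?_, ?_, ?_⟩, ?_⟩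
    · rintro ⟨i, j⟩ hp
      simp only [hp, if_true]
      obtain ⟨h0, h1, h2⟩ := hp
      simp only at h0 h1 h2
      omega
    · intro p hp
      simp only [hp, if_false]
    · intro i j1 j2 h hp hq
      simp only [hp, hq, if_true]
      omega
    · intro i1 i2 j h hp hq
      simp only [hp, hq, if_true]
      obtain ⟨_, h1, _⟩ := hp
      simp only at h1
      omega
    · rintro ⟨i, j⟩
      simp only
      split_ifs with hp
      · obtain ⟨h0, h1, h2⟩ := hp
        simp only at h0 h1 h2
        omega
      · omega
  rw [← Set.Finite.mem_toFinset (tabs_finite _ _), h1] at hmem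
  simp at hmem

/-- `SSYTcount` is a coefficient of the generating polynomial. The value `α 0` plays no role in
`SSYTcount`, and no tableau has a zero entry inside its shape, so it is replaced by zero. -/
lemma SSYTcount_eq_coeff {N m : ℕ} {b : Fin N → ℤ} (hb : ValidBot b) {alpha : ℕ → ℕ}
    (hal : ∀ v, m < v → alpha v = 0) :
    (SSYTcount (colCells b) alpha : ℤ) =
      (schur (MvPolynomial.X : ℕ → MvPolynomial ℕ ℤ) m b).coeff
        (Finsupp.onFinset (Finset.range (m + 1)) (fun v => if v = 0 then 0 else alpha v)
          (by
            intro v hv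
            rw [Finset.mem_range]
            by_contra h
            apply hv
            rw [hal v (by omega), ite_self])) := by
  classical
  have hmon : ∀ T : ℕ × ℕ → ℕ, wt (MvPolynomial.X : ℕ → MvPolynomial ℕ ℤ) b T =
      MvPolynomial.monomial
        (∑ p ∈ (colCells_finite b).toFinset, Finsupp.single (T p) 1) (1 : ℤ) := by
    intro T
    rw [wt, MvPolynomial.monomial_sum_one]
    rfl
  have hcont : ∀ (T : ℕ × ℕ → ℕ) (v : ℕ),
      (∑ p ∈ (colCells_finite b).toFinset, Finsupp.single (T p) 1 : ℕ →₀ ℕ) v =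
        contentOf (colCells b) T v := by
    intro T v
    have hset : {p ∈ colCells b | T p = v} =
        ((colCells_finite b).toFinset.filter fun p => T p = v : Finset (ℕ × ℕ)) := by
      ext p; simp
    rw [contentOf, hset, Set.ncard_coe_finset, Finsupp.finsetSum_apply, Finset.card_filter]
    refine Finset.sum_congr rfl fun p _ => ?_
    rw [Finsupp.single_apply]
  rw [schur, MvPolynomial.coeff_sum]
  simp only [hmon, MvPolynomial.coeff_monomial]
  rw [← Finset.sum_filter, Finset.sum_const, nsmul_eq_mul, mul_one, SSYTcount,
    ← Set.ncard_coe_finset]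
  congr 2
  ext T
  simp only [Finset.coe_filter, Set.Finite.mem_toFinset, Set.mem_ofPred_eq]
  constructor
  · rintro ⟨hT, hc⟩
    have hle : ∀ p, T p ≤ m := by
      intro p
      by_contra hgt
      have hp : p ∈ colCells b := by
        by_contra hp
        have := hT.2.1 p hp
        omega
      have h1 := hc (T p) (by omega)
      rw [hal _ (by omega), contentOf, Set.ncard_eq_zero
        ((colCells_finite b).subset fun _ h => h.1)] at h1
      have : p ∈ {q ∈ colCells b | T q = T p} := ⟨hp, rfl⟩
      rw [h1] at this
      exact this
    refine ⟨⟨hb, hT, hle⟩, ?_⟩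
    ext v
    rw [hcont, Finsupp.onFinset_apply]
    split_ifs with hv
    · subst hv
      rw [contentOf, Set.ncard_eq_zero ((colCells_finite b).subset fun _ h => h.1)]
      ext p
      simp only [Set.mem_ofPred_eq, Set.mem_empty_iff_false, iff_false, not_and]
      intro hp
      exact (hT.1 p hp).ne'
    · exact hc v (by omega)
  · rintro ⟨⟨-, hT, -⟩, hc⟩
    refine ⟨hT, fun v hv => ?_⟩
    rw [← hcont, hc, Finsupp.onFinset_apply, if_neg (by omega)]

/-- Let `n ≥ 1`, `0 ≤ k ≤ 1`, and let `λ = (λa, 1^{λl-1})`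
be a hook with `λl ≤ λa ≤ k + n`.  Then `s_{𝒮(λᵗ,k,n)}` and `s_{𝒮(λ,k,n)}`
are equal upon restricting to `n+1` variables: for every content `α`
supported on `{1,…,n+1}` the monomial coefficients agree. -/
theorem hook_transpose_eq_in_nPlusOne_variables
    (n k la ll : ℕ) (hn : 1 ≤ n) (hk : k ≤ 1) (hll : 1 ≤ ll) (hlla : ll ≤ la)
    (hla : la ≤ k + n) :
    ∀ alpha : ℕ → ℕ, (∀ v, n + 1 < v → alpha v = 0) →
      SSYTcount (SBF (hookFun ll la) k n) alpha =
      SSYTcount (SBF (hookFun la ll) k n) alpha := by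
  intro alpha hal
  obtain ⟨c, hc⟩ : ∃ c, n + k + c = n + 1 := ⟨1 - k, by omega⟩
  rw [SBF_eq_colCells hk hll (hll.trans hlla) (hlla.trans hla),
    SBF_eq_colCells hk (hll.trans hlla) hll hla]
  have hdet : (elemMat (MvPolynomial.X : ℕ → MvPolynomial ℕ ℤ) (n + 1)
      (fun _ : Fin (n + k) => (n : ℤ))).det ≠ 0 := by
    rw [← schur_eq_det _ _ _ fun _ _ _ => le_rfl]
    exact schur_const_ne_zero hc
  have hcomm := det_hookBot_comm (MvPolynomial.X : ℕ → MvPolynomial ℕ ℤ) hc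
    ⟨la - 1, by omega⟩ ⟨ll - 1, by omega⟩ hdet
  simp only at hcomm
  rw [← schur_eq_det _ _ _ (hookBot_antitone _ _ _ _),
    ← schur_eq_det _ _ _ (hookBot_antitone _ _ _ _)] at hcomm
  have h := SSYTcount_eq_coeff (hookBot_valid (n := n) hk rfl (ll - 1) (la - 1)) hal
  rw [hcomm, ← SSYTcount_eq_coeff (hookBot_valid (n := n) hk rfl (la - 1) (ll - 1)) hal] at h
  exact_mod_cast h
end
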